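/- arXiv:2408.00313 — 2 statements merged into one kernel-verified Lean document; each statement's English description precedes it below -/
import Mathlib

section
/- Invariance of (2,5)-cuspidal edges under isometric and anti-isometric deformations: let f be a generalized timelike minimal surface with real Weierstrass data (g1, g2, ω1 du, ω2 dv) and let p be an ω-singular point of f. Then the following are equivalent: (i) f is A-equivalent at p to the (2,5)-cuspidal edge f_CE^{(2,5)}(u,v) = (u, v^2, v^5) at the origin; (ii) for every θ ∈ R the associated family member f_θ is A-equivalent at p to the (2,5)-cuspidal edge; (iii) the conjugate surface f̂ is A-equivalent at p to the (2,5)-cuspidal edge. -/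
noncomputable section

open Real Filter

abbrev R2 : Type := ℝ × ℝ
abbrev R3 : Type := ℝ × ℝ × ℝ

/-- The partial derivative in the `u`-direction. -/
def pu (f : R2 → R3) (p : R2) : R3 := fderiv ℝ f p (1, 0)
/-- The partial derivative in the `v`-direction. -/
def pv (f : R2 → R3) (p : R2) : R3 := fderiv ℝ f p (0, 1)

/-- Determinant of three column vectors in ℝ³. -/
def det3 (a b c : R3) : ℝ :=
  a.1 * (b.2.1 * c.2.2 - b.2.2 * c.2.1)
  - b.1 * (a.2.1 * c.2.2 - a.2.2 * c.2.1)
  + c.1 * (a.2.1 * b.2.2 - a.2.2 * b.2.1)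

/-- Determinant of two vectors in ℝ². -/
def det2 (a b : R2) : ℝ := a.1 * b.2 - a.2 * b.1

/-- Euclidean inner product on ℝ³. -/
def ip3 (a b : R3) : ℝ := a.1 * b.1 + a.2.1 * b.2.1 + a.2.2 * b.2.2

/-- `f : ℝ² → ℝ³ = 𝕃³` is the generalized timelike minimal surface with real Weierstrass
data `(g1, g2, w1 du, w2 dv)`: it is smooth, its partial derivatives are
`f_u = (ω1/2)·(-1-g1², 1-g1², 2g1)` and `f_v = (ω2/2)·(1+g2², 1-g2², -2g2)`
(which encodes the Weierstrass-type integral representation), and it is an immersion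
on an open dense set. -/
structure IsGTMS (f : R2 → R3) (g1 g2 w1 w2 : ℝ → ℝ) : Prop where
  smooth_f : ContDiff ℝ (⊤ : ℕ∞) f
  smooth_g1 : ContDiff ℝ (⊤ : ℕ∞) g1
  smooth_g2 : ContDiff ℝ (⊤ : ℕ∞) g2
  smooth_w1 : ContDiff ℝ (⊤ : ℕ∞) w1
  smooth_w2 : ContDiff ℝ (⊤ : ℕ∞) w2
  deriv_u : ∀ p : R2, pu f p =
    ((-1 - g1 p.1 ^ 2) * w1 p.1 / 2, (1 - g1 p.1 ^ 2) * w1 p.1 / 2, g1 p.1 * w1 p.1)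
  deriv_v : ∀ p : R2, pv f p =
    ((1 + g2 p.2 ^ 2) * w2 p.2 / 2, (1 - g2 p.2 ^ 2) * w2 p.2 / 2, -(g2 p.2 * w2 p.2))
  dense_immersion : Dense {p : R2 | Function.Injective (fderiv ℝ f p)}

/-- `Φ` is a germ of diffeomorphism at `p`. -/
def IsLocalDiffeoAt {E F : Type*} [NormedAddCommGroup E] [NormedSpace ℝ E]
    [NormedAddCommGroup F] [NormedSpace ℝ F] (Φ : E → F) (p : E) : Prop :=
  ∃ (U : Set E) (V : Set F) (Φinv : F → E),
    IsOpen U ∧ p ∈ U ∧ IsOpen V ∧ Φ p ∈ V ∧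
    ContDiffOn ℝ (⊤ : ℕ∞) Φ U ∧ ContDiffOn ℝ (⊤ : ℕ∞) Φinv V ∧
    Set.MapsTo Φ U V ∧ Set.MapsTo Φinv V U ∧
    (∀ x ∈ U, Φinv (Φ x) = x) ∧ (∀ y ∈ V, Φ (Φinv y) = y)

/-- 𝒜-equivalence of the germ of `f1` at `p1` and the germ of `f2` at `p2`. -/
def AEquiv (f1 : R2 → R3) (p1 : R2) (f2 : R2 → R3) (p2 : R2) : Prop :=
  ∃ (Φ : R2 → R2) (Ψ : R3 → R3),
    IsLocalDiffeoAt Φ p1 ∧ Φ p1 = p2 ∧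
    IsLocalDiffeoAt Ψ (f1 p1) ∧ Ψ (f1 p1) = f2 p2 ∧
    ∀ᶠ x in nhds p1, Ψ (f1 x) = f2 (Φ x)

/-- The canonical unit normal of a generalized timelike minimal surface. -/
def gtmsNormal (g1 g2 : ℝ → ℝ) (p : R2) : R3 :=
  (Real.sqrt ((1 - g1 p.1 * g2 p.2) ^ 2 + 2 * (g1 p.1 + g2 p.2) ^ 2))⁻¹ •
    (g1 p.1 + g2 p.2, -g1 p.1 + g2 p.2, 1 + g1 p.1 * g2 p.2)

/-- The signed area density function `λ = det(f_u, f_v, n)`. -/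
def areaDensity (f : R2 → R3) (g1 g2 : ℝ → ℝ) (p : R2) : ℝ :=
  det3 (pu f p) (pv f p) (gtmsNormal g1 g2 p)

/-- `f` is a front at `p`: the Legendrian lift `(f, n)` is an immersion at `p`,
where `n` is the canonical unit normal. -/
def IsFrontAt (f : R2 → R3) (g1 g2 : ℝ → ℝ) (p : R2) : Prop :=
  Function.Injective (fderiv ℝ (fun q => (f q, gtmsNormal g1 g2 q)) p)

/-- The differential of `f` at `p` has rank one. -/
def RankOne (f : R2 → R3) (p : R2) : Prop :=
  LinearMap.rank (fderiv ℝ f p).toLinearMap = 1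

/-- Directional derivative of `F` along the vector field `X`. -/
def vD (X : R2 → R2) (F : R2 → R3) : R2 → R3 := fun q => fderiv ℝ F q (X q)

/-- `φ_i = g_i' / (g_i² ω_i)`. -/
def phiW (g w : ℝ → ℝ) : ℝ → ℝ := fun t => deriv g t / (g t ^ 2 * w t)
/-- `Φ_i = (g_i/g_i') φ_i'`. -/
def PhiW (g w : ℝ → ℝ) : ℝ → ℝ := fun t => g t / deriv g t * deriv (phiW g w) t

/-- standard cuspidal butterfly -/
def fCBF : R2 → R3 := fun q =>
  (q.1, 5 * q.2 ^ 4 + 2 * q.1 * q.2, 4 * q.2 ^ 5 + q.1 * q.2 ^ 2 - q.1 ^ 2)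
/-- standard cuspidal S₁⁺ singularity -/
def fCS1p : R2 → R3 := fun q => (q.1, q.2 ^ 2, q.2 ^ 3 * (q.1 ^ 2 + q.2 ^ 2))
/-- standard cuspidal S₁⁻ singularity -/
def fCS1m : R2 → R3 := fun q => (q.1, q.2 ^ 2, q.2 ^ 3 * (q.1 ^ 2 - q.2 ^ 2))
/-- standard cuspidal edge -/
def fCE : R2 → R3 := fun q => (q.1, q.2 ^ 2, q.2 ^ 3)
/-- standard (2,5)-cuspidal edge -/
def fCE25 : R2 → R3 := fun q => (q.1, q.2 ^ 2, q.2 ^ 5)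
/-- standard cuspidal beaks -/
def fCBK : R2 → R3 := fun q =>
  (q.2, q.1 ^ 3 - q.1 * q.2 ^ 2, 3 * q.1 ^ 4 - 2 * q.1 ^ 2 * q.2 ^ 2)
/-- standard cuspidal lips -/
def fCLP : R2 → R3 := fun q =>
  (q.2, q.1 ^ 3 + q.1 * q.2 ^ 2, 3 * q.1 ^ 4 + 2 * q.1 ^ 2 * q.2 ^ 2)
/-- standard D₄⁺ singularity -/
def fD4p : R2 → R3 := fun q =>
  (q.1 * q.2, q.1 ^ 2 + 3 * q.2 ^ 2, q.1 ^ 2 * q.2 + q.2 ^ 3)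
/-- standard D₄⁻ singularity -/
def fD4m : R2 → R3 := fun q =>
  (q.1 * q.2, q.1 ^ 2 - 3 * q.2 ^ 2, q.1 ^ 2 * q.2 - q.2 ^ 3)

/-!
A generalized timelike minimal surface is `f (u, v) = A u + B v` with null curves `A`, `B`, and
at an `ω`-singular point one of them, say `A`, is singular. If `f` is a `(2,5)`-cuspidal edge,
then `A` reads `Θ (a s, s ^ 2, s ^ 5)` in a local coordinate `s`, with `Θ` a diffeomorphism
germ, `a' 0 = 0` and `B'` proportional to `dΘ (1, 0, 0)`; in particular `A'''` is proportional
to `B'`. Differentiating `⟨A', A'⟩ = 0` gives `⟨A'', A'''⟩ = 0`, and `A''`, `B'` are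
independent null vectors, hence not orthogonal, so `A''' = 0` and the cubic term of `a`
vanishes. By Whitney's theorem `a s = E (s ^ 2) + s ^ 5 * O (s ^ 2)`, so `A = G (s ^ 2, s ^ 5)`
with the image of `dG` transverse to `B'`. Conversely this property makes `A + B` a
`(2,5)`-cuspidal edge, and it is invariant under independent rescalings of `A` and `B`.
-/

section Whitney

open Topology
open scoped ContDiff

variable {F : Type*} [NormedAddCommGroup F] [NormedSpace ℝ F]

theorem contDiff_of_hasDerivAt_succ {e : ℕ → ℝ → F}
    (he : ∀ k x, HasDerivAt (e k) (e (k + 1) x) x) (k : ℕ) : ContDiff ℝ ∞ (e k) := by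
  have hiter : ∀ m, iteratedDeriv m (e k) = e (k + m) := fun m => by
    induction m with
    | zero => simp
    | succ m ih => rw [iteratedDeriv_succ, ih]; exact funext fun x => (he _ x).deriv
  refine contDiff_of_differentiable_iteratedDeriv fun m _ => ?_
  rw [hiter]
  exact fun x => (he _ x).differentiableAt

theorem hasDerivAt_iteratedDeriv {h : ℝ → F} (hh : ContDiff ℝ ∞ h) (k : ℕ) (x : ℝ) :
    HasDerivAt (iteratedDeriv k h) (iteratedDeriv (k + 1) h x) x := by
  rw [iteratedDeriv_succ]
  exact (hh.differentiable_iteratedDeriv k (by exact_mod_cast WithTop.coe_lt_top k) x).hasDerivAt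

theorem hasDerivAt_integral_pow_smul_iteratedDeriv {h : ℝ → F} (hh : ContDiff ℝ ∞ h)
    (k : ℕ) (x : ℝ) :
    HasDerivAt (fun s => ∫ t in (0 : ℝ)..1, t ^ k • iteratedDeriv (k + 1) h (t * s))
      (∫ t in (0 : ℝ)..1, t ^ (k + 1) • iteratedDeriv (k + 2) h (t * x)) x := by
  have hcont : ∀ i j, Continuous fun z : ℝ × ℝ => z.1 ^ i • iteratedDeriv j h (z.1 * z.2) :=
    fun i j => (continuous_fst.pow i).smul
      ((hh.continuous_iteratedDeriv j (by exact_mod_cast le_top)).comp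
        (continuous_fst.mul continuous_snd))
  have hslice : ∀ i j s, Continuous fun t : ℝ => t ^ i • iteratedDeriv j h (t * s) :=
    fun i j s => (hcont i j).comp (continuous_id.prodMk continuous_const)
  obtain ⟨C, hC⟩ := (isCompact_Icc.prod (isCompact_closedBall x 1)).exists_bound_of_continuousOn
    (hcont (k + 1) (k + 2)).continuousOn (s := Set.Icc (0 : ℝ) 1 ×ˢ Metric.closedBall x 1)
  refine (intervalIntegral.hasDerivAt_integral_of_dominated_loc_of_deriv_le
    (bound := fun _ => C) (Metric.closedBall_mem_nhds x one_pos)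
    (.of_forall fun s => (hslice k (k + 1) s).aestronglyMeasurable)
    ((hslice k (k + 1) x).intervalIntegrable 0 1) (hslice _ _ x).aestronglyMeasurable
    (.of_forall fun t ht s hs => hC (t, s) ⟨?_, hs⟩) intervalIntegrable_const
    (.of_forall fun t _ s _ => ?_)).2
  · rw [Set.uIoc_of_le zero_le_one] at ht
    exact Set.Ioc_subset_Icc_self ht
  · have hmul : HasDerivAt (fun s => t * s) t s := by simpa using (hasDerivAt_id s).const_mul t
    have := ((hasDerivAt_iteratedDeriv hh (k + 1) (t * s)).scomp s hmul).const_smul (t ^ k)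
    rwa [smul_smul, ← pow_succ] at this

theorem exists_contDiff_eq_smul [CompleteSpace F] {h : ℝ → F} (hh : ContDiff ℝ ∞ h)
    (h0 : h 0 = 0) : ∃ q : ℝ → F, ContDiff ℝ ∞ q ∧ ∀ s, h s = s • q s := by
  refine ⟨fun s => ∫ t in (0 : ℝ)..1, t ^ 0 • iteratedDeriv (0 + 1) h (t * s),
    contDiff_of_hasDerivAt_succ
      (e := fun k s => ∫ t in (0 : ℝ)..1, t ^ k • iteratedDeriv (k + 1) h (t * s))
      (hasDerivAt_integral_pow_smul_iteratedDeriv hh) 0, fun s => ?_⟩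
  simp only [pow_zero, one_smul, zero_add, iteratedDeriv_one,
    intervalIntegral.smul_integral_comp_mul_right, zero_mul, one_mul]
  rw [intervalIntegral.integral_deriv_eq_sub
    (fun x _ => hh.differentiable (by simp) x)
    ((hh.continuous_deriv (by simp)).intervalIntegrable 0 s), h0, sub_zero]

theorem iteratedDeriv_succ_id_smul {q : ℝ → F} (hq : ContDiff ℝ ∞ q) (k : ℕ) :
    iteratedDeriv (k + 1) (fun s => s • q s) =
      fun s => s • iteratedDeriv (k + 1) q s + ((k : ℝ) + 1) • iteratedDeriv k q s := by
  have hd := hasDerivAt_iteratedDeriv hq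
  induction k with
  | zero =>
    rw [zero_add, iteratedDeriv_one]
    refine funext fun s => ((hasDerivAt_id s).smul (hd 0 s)).deriv.trans ?_
    simp
  | succ k ih =>
    rw [iteratedDeriv_succ, ih]
    refine funext fun s =>
      (((hasDerivAt_id s).smul (hd (k + 1) s)).add ((hd k s).const_smul _)).deriv.trans ?_
    push_cast
    simp only [id]
    module

theorem exists_contDiff_eq_pow_smul [CompleteSpace F] {h : ℝ → F} (hh : ContDiff ℝ ∞ h) {n : ℕ}
    (h0 : ∀ k < n, iteratedDeriv k h 0 = 0) :
    ∃ q : ℝ → F, ContDiff ℝ ∞ q ∧ ∀ s, h s = s ^ n • q s := by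
  induction n generalizing h with
  | zero => exact ⟨h, hh, fun s => by simp⟩
  | succ n ih =>
    obtain ⟨r, hr, hhr⟩ := exists_contDiff_eq_smul hh (by simpa using h0 0 n.succ_pos)
    obtain ⟨q, hq, hrq⟩ := ih hr fun k hk => by
      have hk0 := h0 (k + 1) (by omega)
      rw [funext hhr, iteratedDeriv_succ_id_smul hr] at hk0
      simp only [zero_smul, zero_add] at hk0
      exact (smul_eq_zero.1 hk0).resolve_left k.cast_add_one_ne_zero
    exact ⟨q, hq, fun s => by rw [hhr, hrq, smul_smul, pow_succ']⟩

theorem exists_norm_iteratedDeriv_le_of_hasCompactSupport {ψ : ℝ → F} (hψ : ContDiff ℝ ∞ ψ)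
    (hψc : HasCompactSupport ψ) (j : ℕ) : ∃ C, ∀ y, ‖iteratedDeriv j ψ y‖ ≤ C := by
  simp only [← norm_iteratedFDeriv_eq_norm_iteratedDeriv]
  exact (hψ.continuous_iteratedFDeriv (by exact_mod_cast le_top)).bounded_above_of_compact_support
    (hψc.iteratedFDeriv j)

theorem exists_contDiff_eventuallyEq_pow (k : ℕ) {ε : ℝ} (hε : 0 < ε) :
    ∃ φ : ℝ → ℝ, ContDiff ℝ ∞ φ ∧ (φ =ᶠ[𝓝 0] fun y => y ^ k) ∧
      (∀ j, ∃ C, ∀ y, ‖iteratedDeriv j φ y‖ ≤ C) ∧ ∀ j < k, ∀ y, ‖iteratedDeriv j φ y‖ ≤ ε := by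
  let χ : ContDiffBump (0 : ℝ) := default
  let ψ : ℝ → ℝ := fun y => y ^ k * χ y
  have hψ : ContDiff ℝ ∞ ψ := (contDiff_id.pow k).mul χ.contDiff
  choose C hC using
    exists_norm_iteratedDeriv_le_of_hasCompactSupport hψ χ.hasCompactSupport.mul_left
  have hC0 : ∀ j, 0 ≤ C j := fun j => (norm_nonneg _).trans (hC j 0)
  set M := ∑ j ∈ Finset.range k, C j
  have hM : 0 ≤ M := Finset.sum_nonneg fun j _ => hC0 j
  -- Rescaling `ψ` by `δ` multiplies its `j`-th derivative by `δ ^ (j - k)`, small for `j < k`.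
  set δ := 1 + M / ε
  have hδ : 1 ≤ δ := le_add_of_nonneg_right (by positivity)
  have hδ0 : 0 < δ := one_pos.trans_le hδ
  have hφj : ∀ j y, iteratedDeriv j (fun y => (δ ^ k)⁻¹ * ψ (δ * y)) y =
      (δ ^ k)⁻¹ * (δ ^ j * iteratedDeriv j ψ (δ * y)) := fun j y => by
    rw [iteratedDeriv_const_mul_field,
      iteratedDeriv_comp_const_mul (hψ.of_le (by exact_mod_cast le_top))]
  have hbound : ∀ j y, ‖iteratedDeriv j (fun y => (δ ^ k)⁻¹ * ψ (δ * y)) y‖ ≤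
      (δ ^ k)⁻¹ * (δ ^ j * C j) := fun j y => by
    rw [hφj, norm_mul, norm_mul, norm_of_nonneg (by positivity), norm_of_nonneg (by positivity)]
    gcongr
    exact hC j _
  refine ⟨fun y => (δ ^ k)⁻¹ * ψ (δ * y),
    contDiff_const.mul (hψ.comp (contDiff_const.mul contDiff_id)), ?_,
    fun j => ⟨_, hbound j⟩, fun j hj y => (hbound j y).trans ?_⟩
  · have hlim : Tendsto (fun y => δ * y) (𝓝 0) (𝓝 0) := by
      simpa using (continuous_const_mul δ).tendsto 0
    filter_upwards [hlim.eventually χ.eventuallyEq_one] with y hy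
    simp only [ψ, hy, Pi.one_apply, mul_one, mul_pow]
    field_simp
  · have hCM : C j ≤ M := Finset.single_le_sum (fun i _ => hC0 i) (Finset.mem_range.2 hj)
    calc (δ ^ k)⁻¹ * (δ ^ j * C j) ≤ (δ ^ k)⁻¹ * (δ ^ (k - 1) * M) := by
          gcongr
          exacts [hC0 j, by omega]
      _ = M / δ := by
          obtain ⟨i, rfl⟩ := Nat.exists_eq_succ_of_ne_zero (Nat.ne_zero_of_lt hj)
          rw [Nat.succ_sub_one, pow_succ]
          field_simp
      _ ≤ ε := by
          rw [div_le_iff₀ hδ0]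
          simp only [δ, mul_add, mul_div_cancel₀ M hε.ne']
          linarith

theorem iteratedDeriv_tsum_apply [CompleteSpace F] {ι : Type*} {f : ι → ℝ → F} {v : ℕ → ι → ℝ}
    (hf : ∀ i, ContDiff ℝ ∞ (f i)) (hv : ∀ j, Summable (v j))
    (hfv : ∀ j i y, ‖iteratedDeriv j (f i) y‖ ≤ v j i) (j : ℕ) (y : ℝ) :
    iteratedDeriv j (fun y => ∑' i, f i y) y = ∑' i, iteratedDeriv j (f i) y := by
  simp only [← norm_iteratedFDeriv_eq_norm_iteratedDeriv] at hfv
  simp only [iteratedDeriv_eq_iteratedFDeriv]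
  rw [iteratedFDeriv_tsum_apply hf (fun j _ => hv j) (fun j i y _ => hfv j i y) le_top]
  have hsum : Summable fun i => iteratedFDeriv ℝ j (f i) y :=
    .of_norm_bounded (hv j) fun i => hfv j i y
  rw [ContinuousMultilinearMap.tsum_eval hsum]

theorem exists_contDiff_iteratedDeriv_zero_eq [CompleteSpace F] (c : ℕ → F) :
    ∃ b : ℝ → F, ContDiff ℝ ∞ b ∧ ∀ k, iteratedDeriv k b 0 = c k := by
  have hε0 : ∀ k, 0 < (1 / 2) ^ k / (1 + ‖c k‖) := fun k => by positivity
  choose φ hφ hφ0 hbound hε using fun k => exists_contDiff_eventuallyEq_pow k (hε0 k)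
  choose C hC using hbound
  let f : ℕ → ℝ → F := fun k y => φ k y • (k.factorial : ℝ)⁻¹ • c k
  let v : ℕ → ℕ → ℝ := fun j k => if j < k then (1 / 2) ^ k else C k j * ‖c k‖
  have hf : ∀ k, ContDiff ℝ ∞ (f k) := fun k => (hφ k).smul contDiff_const
  have hfj : ∀ j k y, iteratedDeriv j (f k) y =
      iteratedDeriv j (φ k) y • (k.factorial : ℝ)⁻¹ • c k := fun j k y =>
    iteratedDeriv_smul_const ((hφ k).contDiffAt.of_le (by exact_mod_cast le_top)) _
  have hv : ∀ j, Summable (v j) := fun j => by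
    refine summable_geometric_two.congr_atTop ?_
    filter_upwards [eventually_gt_atTop j] with k hk using (if_pos hk).symm
  have hc : ∀ k, ‖(k.factorial : ℝ)⁻¹ • c k‖ ≤ ‖c k‖ := fun k => by
    rw [norm_smul, norm_inv, RCLike.norm_natCast]
    exact mul_le_of_le_one_left (norm_nonneg _)
      (inv_le_one_of_one_le₀ (by exact_mod_cast k.factorial_pos))
  have hfv : ∀ j k y, ‖iteratedDeriv j (f k) y‖ ≤ v j k := fun j k y => by
    rw [hfj, norm_smul]
    by_cases hjk : j < k
    · simp only [v, if_pos hjk]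
      refine (mul_le_mul (hε k j hjk y) (hc k) (norm_nonneg _) (by positivity)).trans ?_
      rw [div_mul_eq_mul_div, div_le_iff₀ (by positivity)]
      gcongr
      linarith
    · simp only [v, if_neg hjk]
      exact mul_le_mul (hC k j y) (hc k) (norm_nonneg _) ((norm_nonneg _).trans (hC k j y))
  have hf0 : ∀ j k, iteratedDeriv j (f k) 0 = if k = j then c k else 0 := fun j k => by
    rw [hfj, (hφ0 k).iteratedDeriv_eq, iteratedDeriv_fun_pow_zero]
    rcases eq_or_ne k j with rfl | hkj
    · simp [smul_smul, k.factorial_ne_zero]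
    · simp [hkj, hkj.symm]
  refine ⟨fun y => ∑' k, f k y, contDiff_tsum hf (fun j _ => hv j) (fun j k y _ => ?_), fun j => ?_⟩
  · rw [norm_iteratedFDeriv_eq_norm_iteratedDeriv]
    exact hfv j k y
  · simp only [iteratedDeriv_tsum_apply hf hv hfv, hf0, tsum_ite_eq]

theorem iteratedDeriv_zero_of_odd {h : ℝ → F} (hodd : h.Odd) {k : ℕ} (hk : Even k) :
    iteratedDeriv k h 0 = 0 := by
  have hneg := iteratedDeriv_comp_neg k h 0
  rw [funext hodd, iteratedDeriv_fun_neg, hk.neg_one_pow, one_smul, neg_zero] at hneg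
  have htwo : (2 : ℝ) • iteratedDeriv k h 0 = 0 := by
    rw [two_smul, add_eq_zero_iff_neg_eq, hneg]
  exact (smul_eq_zero.1 htwo).resolve_left two_ne_zero

theorem even_of_odd_pow_smul {q : ℝ → F} {n : ℕ} (hn : Odd n)
    (hodd : (fun s => s ^ n • q s).Odd) : q.Even := fun s => by
  rcases eq_or_ne s 0 with rfl | hs
  · rw [neg_zero]
  · have := hodd s
    simp only [hn.neg_pow, neg_smul, neg_inj] at this
    exact smul_right_injective F (pow_ne_zero n hs) this

theorem exists_contDiff_even_deriv_eq [CompleteSpace F] {h : ℝ → F} (hh : ContDiff ℝ ∞ h)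
    (heven : h.Even) :
    ∃ q : ℝ → F, ContDiff ℝ ∞ q ∧ q.Even ∧ ∀ s, deriv h s = (2 * s) • q s := by
  have hodd : (deriv h).Odd := fun s => by
    have := deriv_comp_neg h s
    rw [funext heven] at this
    rw [this, neg_neg]
  have hodd0 : deriv h 0 = 0 := by simpa using iteratedDeriv_zero_of_odd hodd Even.zero
  obtain ⟨r, hr, hhr⟩ := exists_contDiff_eq_smul (contDiff_infty_iff_deriv.1 hh).2 hodd0
  have heven_r : r.Even := even_of_odd_pow_smul odd_one (by simpa only [pow_one, ← hhr] using hodd)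
  refine ⟨fun s => (2 : ℝ)⁻¹ • r s, contDiff_const.smul hr, fun s => ?_, fun s => ?_⟩
  · simp only [heven_r s]
  · rw [hhr]
    module

theorem hasDerivAt_comp_sqrt {h q : ℝ → F} (hh : Differentiable ℝ h)
    (hq : ∀ s, deriv h s = (2 * s) • q s) {y : ℝ} (hy : 0 < y) :
    HasDerivAt (fun y => h √y) (q √y) y := by
  have hs : √y ≠ 0 := (sqrt_pos.2 hy).ne'
  refine ((hh √y).hasDerivAt.scomp y (hasDerivAt_sqrt hy.ne')).congr_deriv ?_
  rw [hq, smul_smul, one_div_mul_cancel (mul_ne_zero two_ne_zero hs), one_smul]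

theorem exists_contDiff_eq_comp_sq_of_even [CompleteSpace F] {h : ℝ → F} (hh : ContDiff ℝ ∞ h)
    (heven : h.Even) : ∃ E : ℝ → F, ContDiff ℝ ∞ E ∧ ∀ s, h s = E (s ^ 2) := by
  choose next hnext using fun g : {g : ℝ → F // ContDiff ℝ ∞ g ∧ g.Even} =>
    exists_contDiff_even_deriv_eq g.2.1 g.2.2
  let seq : ℕ → {g : ℝ → F // ContDiff ℝ ∞ g ∧ g.Even} := fun k =>
    (fun g => ⟨next g, (hnext g).1, (hnext g).2.1⟩)^[k] ⟨h, hh, heven⟩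
  let q : ℕ → ℝ → F := fun k => (seq k).1
  have hq : ∀ k, ContDiff ℝ ∞ (q k) := fun k => (seq k).2.1
  have hderiv : ∀ k s, deriv (q k) s = (2 * s) • q (k + 1) s := fun k s => by
    simp only [q, seq, Function.iterate_succ_apply']
    exact (hnext _).2.2 s
  -- `q k √y` is the `k`-th derivative of `h √y`; a Borel series continues it smoothly to `y < 0`.
  obtain ⟨b, hb, hb0⟩ := exists_contDiff_iteratedDeriv_zero_eq fun k => q k 0
  let E : ℕ → ℝ → F := fun k y => if 0 ≤ y then q k √y else iteratedDeriv k b y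
  have hE_cont : ∀ k, Continuous (E k) := fun k =>
    Continuous.if_le ((hq k).continuous.comp continuous_sqrt)
      (hb.continuous_iteratedDeriv k (by exact_mod_cast le_top)) continuous_const continuous_id
      fun y hy => by rw [← hy, sqrt_zero, hb0]
  have hE_deriv : ∀ k, ∀ y ≠ 0, HasDerivAt (E k) (E (k + 1) y) y := fun k y hy => by
    rcases hy.lt_or_gt with hy | hy
    · simp only [E, if_neg hy.not_ge]
      refine (hasDerivAt_iteratedDeriv hb k y).congr_of_eventuallyEq ?_
      filter_upwards [Iio_mem_nhds hy] with z hz using if_neg (not_le.2 hz)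
    · simp only [E, if_pos hy.le]
      refine (hasDerivAt_comp_sqrt ((hq k).differentiable (by simp)) (hderiv k)
        hy).congr_of_eventuallyEq ?_
      filter_upwards [Ioi_mem_nhds hy] with z hz using if_pos (le_of_lt hz)
  refine ⟨E 0, contDiff_of_hasDerivAt_succ (fun k => hasDerivAt_of_hasDerivAt_of_ne' (hE_deriv k)
    (hE_cont k).continuousAt (hE_cont (k + 1)).continuousAt) 0, fun s => ?_⟩
  simp only [E, if_pos (sq_nonneg s), sqrt_sq_eq_abs]
  rcases abs_choice s with hs | hs
  · rw [hs]; rfl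
  · rw [hs]; exact (heven s).symm

theorem exists_contDiff_eq_comp_sq_add [CompleteSpace F] {h : ℝ → F} (hh : ContDiff ℝ ∞ h) {m : ℕ}
    (h0 : ∀ k < m, iteratedDeriv (2 * k + 1) h 0 = 0) :
    ∃ E O : ℝ → F, ContDiff ℝ ∞ E ∧ ContDiff ℝ ∞ O ∧
      ∀ s, h s = E (s ^ 2) + s ^ (2 * m + 1) • O (s ^ 2) := by
  have hneg : ContDiff ℝ ∞ fun s => h (-s) := hh.comp contDiff_neg
  let even : ℝ → F := fun s => (2 : ℝ)⁻¹ • (h s + h (-s))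
  let odd : ℝ → F := fun s => (2 : ℝ)⁻¹ • (h s - h (-s))
  have hodd : odd.Odd := fun s => by
    simp only [odd, neg_neg]
    module
  have hodd_smooth : ContDiff ℝ ∞ odd := contDiff_const.smul (hh.sub hneg)
  obtain ⟨E, hE, hevenE⟩ := exists_contDiff_eq_comp_sq_of_even (h := even)
    (contDiff_const.smul (hh.add hneg)) fun s => by simp only [even, neg_neg, add_comm]
  have hodd0 : ∀ k < 2 * m + 1, iteratedDeriv k odd 0 = 0 := fun k hk => by
    rcases k.even_or_odd' with ⟨i, rfl | rfl⟩
    · exact iteratedDeriv_zero_of_odd hodd (even_two_mul i)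
    · simp only [odd]
      rw [iteratedDeriv_fun_const_smul_field,
        iteratedDeriv_fun_sub (contDiff_infty.1 hh _).contDiffAt
          (contDiff_infty.1 hneg _).contDiffAt,
        iteratedDeriv_comp_neg, neg_zero, h0 i (by omega)]
      simp
  obtain ⟨q, hq, hoddq⟩ := exists_contDiff_eq_pow_smul hodd_smooth hodd0
  have hqeven : q.Even :=
    even_of_odd_pow_smul (odd_two_mul_add_one m) (by simpa only [← hoddq] using hodd)
  obtain ⟨O, hO, hqO⟩ := exists_contDiff_eq_comp_sq_of_even hq hqeven
  refine ⟨E, O, hE, hO, fun s => ?_⟩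
  rw [← hevenE, ← hqO, ← hoddq]
  simp only [even, odd]
  module

end Whitney

section Germs

open Topology
open scoped ContDiff

variable {E F : Type*} [NormedAddCommGroup E] [NormedSpace ℝ E] [NormedAddCommGroup F]
  [NormedSpace ℝ F]

theorem exists_contDiff_eventuallyEq [FiniteDimensional ℝ E] {f : E → F} {U : Set E} {x₀ : E}
    (hU : U ∈ 𝓝 x₀) (hf : ContDiffOn ℝ ∞ f U) :
    ∃ g : E → F, ContDiff ℝ ∞ g ∧ g =ᶠ[𝓝 x₀] f := by
  obtain ⟨r, hr, hrU⟩ := Metric.mem_nhds_iff.1 hU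
  let χ : ContDiffBump x₀ := ⟨r / 3, r / 2, by positivity, by linarith⟩
  refine ⟨fun x => χ x • f x, contDiff_iff_contDiffAt.2 fun x => ?_, ?_⟩
  · by_cases hx : x ∈ Metric.closedBall x₀ (r / 2)
    · have hxr : x ∈ Metric.ball x₀ r := Metric.closedBall_subset_ball (by linarith) hx
      exact χ.contDiffAt.smul
        (hf.contDiffAt (mem_of_superset (Metric.isOpen_ball.mem_nhds hxr) hrU))
    · refine (contDiffAt_const (c := (0 : F))).congr_of_eventuallyEq ?_
      filter_upwards [Metric.isClosed_closedBall.isOpen_compl.mem_nhds hx] with z hz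
      rw [χ.zero_of_le_dist (le_of_lt (by simpa using hz)), zero_smul]
  · filter_upwards [χ.eventuallyEq_one] with x hx
    rw [hx, Pi.one_apply, one_smul]

theorem IsLocalDiffeoAt.contDiffAt {Φ : E → F} {p : E} (h : IsLocalDiffeoAt Φ p) :
    ContDiffAt ℝ ∞ Φ p := by
  obtain ⟨U, -, -, hU, hpU, -, -, hΦ, -⟩ := h
  exact hΦ.contDiffAt (hU.mem_nhds hpU)

theorem IsLocalDiffeoAt.exists_symm {Φ : E → F} {p : E} (h : IsLocalDiffeoAt Φ p) :
    ∃ Φinv : F → E, IsLocalDiffeoAt Φinv (Φ p) ∧ (∀ᶠ x in 𝓝 p, Φinv (Φ x) = x) ∧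
      ∀ᶠ y in 𝓝 (Φ p), Φ (Φinv y) = y := by
  obtain ⟨U, V, Φinv, hU, hpU, hV, hpV, hΦ, hΦinv, hUV, hVU, hl, hr⟩ := h
  refine ⟨Φinv, ⟨V, U, Φ, hV, hpV, hU, ?_, hΦinv, hΦ, hVU, hUV, hr, hl⟩, ?_, ?_⟩
  · rwa [hl p hpU]
  · filter_upwards [hU.mem_nhds hpU] with x hx using hl x hx
  · filter_upwards [hV.mem_nhds hpV] with y hy using hr y hy

theorem IsLocalDiffeoAt.injective_fderiv {Φ : E → F} {p : E} (h : IsLocalDiffeoAt Φ p) :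
    Function.Injective (fderiv ℝ Φ p) := by
  obtain ⟨Φinv, hΦinv, hl, -⟩ := h.exists_symm
  have hcomp := (hΦinv.contDiffAt.differentiableAt (by simp)).hasFDerivAt.comp p
    (h.contDiffAt.differentiableAt (by simp)).hasFDerivAt
  have hid := hcomp.unique ((hasFDerivAt_id p).congr_of_eventuallyEq hl)
  exact Function.LeftInverse.injective (DFunLike.congr_fun hid)

theorem IsLocalDiffeoAt.exists_contDiff [FiniteDimensional ℝ E] {Φ : E → F} {p : E}
    (h : IsLocalDiffeoAt Φ p) :
    ∃ g : E → F, ContDiff ℝ ∞ g ∧ g =ᶠ[𝓝 p] Φ ∧ Function.Injective (fderiv ℝ g p) := by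
  have hinj := h.injective_fderiv
  obtain ⟨U, -, -, hU, hpU, -, -, hΦ, -⟩ := h
  obtain ⟨g, hg, hgΦ⟩ := exists_contDiff_eventuallyEq (hU.mem_nhds hpU) hΦ
  exact ⟨g, hg, hgΦ, by rwa [hgΦ.fderiv_eq]⟩

theorem isLocalDiffeoAt_of_isInvertible_fderiv [CompleteSpace E] {Φ : E → F} {p : E}
    (hΦ : ContDiff ℝ ∞ Φ) (hp : (fderiv ℝ Φ p).IsInvertible) : IsLocalDiffeoAt Φ p := by
  have hd : ∀ x, HasFDerivAt Φ (fderiv ℝ Φ x) x := fun x =>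
    (hΦ.differentiable (by simp) x).hasFDerivAt
  have hS : IsOpen {x | (fderiv ℝ Φ x).IsInvertible} :=
    ContinuousLinearEquiv.isOpen.preimage (hΦ.continuous_fderiv (by simp))
  obtain ⟨e, he⟩ := id hp
  let P := hΦ.contDiffAt.toOpenPartialHomeomorph Φ (he ▸ hd p) (by simp)
  have hpP : p ∈ P.source := hΦ.contDiffAt.mem_toOpenPartialHomeomorph_source (he ▸ hd p) (by simp)
  have hl : ∀ x ∈ P.source, P.symm (Φ x) = x := fun x hx => P.left_inv hx
  refine ⟨P.source ∩ {x | (fderiv ℝ Φ x).IsInvertible},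
    P.target ∩ P.symm ⁻¹' {x | (fderiv ℝ Φ x).IsInvertible}, P.symm, P.open_source.inter hS,
    ⟨hpP, hp⟩, P.isOpen_inter_preimage_symm hS, ?_, hΦ.contDiffOn, fun y hy => ?_, ?_,
    fun y hy => ⟨P.map_target hy.1, hy.2⟩, fun x hx => hl x hx.1, fun y hy => P.right_inv hy.1⟩
  · exact ⟨P.map_source hpP, by rwa [Set.mem_preimage, hl p hpP]⟩
  · obtain ⟨e', he'⟩ := hy.2
    exact (P.contDiffAt_symm hy.1 (he' ▸ hd _) hΦ.contDiffAt).contDiffWithinAt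
  · exact fun x hx => ⟨P.map_source hx.1, by rw [Set.mem_preimage, hl x hx.1]; exact hx.2⟩

theorem isLocalDiffeoAt_of_injective_fderiv [FiniteDimensional ℝ E] {Φ : E → E} {p : E}
    (hΦ : ContDiff ℝ ∞ Φ) (hp : Function.Injective (fderiv ℝ Φ p)) : IsLocalDiffeoAt Φ p :=
  have : CompleteSpace E := FiniteDimensional.complete ℝ E
  isLocalDiffeoAt_of_isInvertible_fderiv hΦ
    ⟨(LinearEquiv.ofInjectiveEndo (fderiv ℝ Φ p).toLinearMap hp).toContinuousLinearEquiv, rfl⟩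

theorem exists_contDiff_localInverse_of_deriv_ne_zero {y : ℝ → ℝ} {t : ℝ} (hy : ContDiff ℝ ∞ y)
    (ht : deriv y t ≠ 0) :
    ∃ σ : ℝ → ℝ, ContDiff ℝ ∞ σ ∧ (∀ᶠ u in 𝓝 t, σ (y u) = u) ∧ ∀ᶠ s in 𝓝 (y t), y (σ s) = s := by
  have hinj : Function.Injective (fderiv ℝ y t) := (injective_iff_map_eq_zero _).2 fun h hh => by
    rw [fderiv_eq_smul_deriv, smul_eq_mul] at hh
    exact (mul_eq_zero.1 hh).resolve_right ht
  obtain ⟨τ, hτ, hl, hr⟩ := (isLocalDiffeoAt_of_injective_fderiv hy hinj).exists_symm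
  obtain ⟨σ, hσ, hστ, -⟩ := hτ.exists_contDiff
  refine ⟨σ, hσ, ?_, ?_⟩
  · filter_upwards [hl, (hy.continuous.tendsto t).eventually hστ] with u hu hσu
    rw [hσu, hu]
  · filter_upwards [hr, hστ] with s hs hσs
    rw [hσs, hs]

theorem AEquiv.exists_contDiff {f f₀ : R2 → R3} {p p₀ : R2} (h : AEquiv f p f₀ p₀)
    (hf : ContinuousAt f p) :
    ∃ (Φ : R2 → R2) (Θ : R3 → R3), ContDiff ℝ ∞ Φ ∧ ContDiff ℝ ∞ Θ ∧ Φ p = p₀ ∧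
      Function.Injective (fderiv ℝ Φ p) ∧ Function.Injective (fderiv ℝ Θ (f₀ p₀)) ∧
      ∀ᶠ q in 𝓝 p, f q = Θ (f₀ (Φ q)) := by
  obtain ⟨φ, Ψ, hφ, hφp, hΨ, hΨp, heq⟩ := h
  obtain ⟨ψ, hψ, hψl, -⟩ := hΨ.exists_symm
  obtain ⟨Φ, hΦ, hΦφ, hΦinj⟩ := hφ.exists_contDiff
  obtain ⟨Θ, hΘ, hΘψ, hΘinj⟩ := hψ.exists_contDiff
  rw [hΨp] at hΘinj
  refine ⟨Φ, Θ, hΦ, hΘ, hΦφ.self_of_nhds.trans hφp, hΦinj, hΘinj, ?_⟩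
  have hΨf : Tendsto (fun q => Ψ (f q)) (𝓝 p) (𝓝 (Ψ (f p))) :=
    hΨ.contDiffAt.continuousAt.tendsto.comp hf
  filter_upwards [heq, hΦφ, hf.eventually hψl, hΨf.eventually hΘψ] with q h₁ h₂ h₃ h₄
  rw [h₂, ← h₁, h₄, h₃]

theorem aEquiv_of_eventuallyEq {f f₀ : R2 → R3} {p p₀ : R2} {Φ : R2 → R2} {H : R3 → R3}
    (hΦ : IsLocalDiffeoAt Φ p) (hΦp : Φ p = p₀) (hH : IsLocalDiffeoAt H (f₀ p₀))
    (hf₀ : ContinuousAt f₀ p₀) (hf : ∀ᶠ q in 𝓝 p, f q = H (f₀ (Φ q))) : AEquiv f p f₀ p₀ := by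
  obtain ⟨Ψ, hΨ, hΨH, -⟩ := hH.exists_symm
  have hfp : f p = H (f₀ p₀) := hΦp ▸ hf.self_of_nhds
  refine ⟨Φ, Ψ, hΦ, hΦp, hfp ▸ hΨ, hfp ▸ hΨH.self_of_nhds, ?_⟩
  have hlim : Tendsto (fun q => f₀ (Φ q)) (𝓝 p) (𝓝 (f₀ p₀)) :=
    hf₀.tendsto.comp (hΦp ▸ hΦ.contDiffAt.continuousAt.tendsto)
  filter_upwards [hf, hlim.eventually hΨH] with q h₁ h₂
  rw [h₁, h₂]

theorem IsLocalDiffeoAt.comp_continuousLinearEquiv {E' : Type*} [NormedAddCommGroup E']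
    [NormedSpace ℝ E'] {Φ : E → F} {p : E} (h : IsLocalDiffeoAt Φ p) (e : E' ≃L[ℝ] E) :
    IsLocalDiffeoAt (fun x => Φ (e x)) (e.symm p) := by
  obtain ⟨U, V, Φinv, hU, hpU, hV, hpV, hΦ, hΦinv, hUV, hVU, hl, hr⟩ := h
  have hem : ∀ y ∈ V, e (e.symm (Φinv y)) ∈ U := fun y hy => by simpa using hVU hy
  refine ⟨e ⁻¹' U, V, fun y => e.symm (Φinv y), hU.preimage e.continuous, by simpa using hpU, hV,
    by simpa using hpV, hΦ.comp e.contDiff.contDiffOn (Set.mapsTo_preimage e U),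
    e.symm.contDiff.comp_contDiffOn hΦinv, fun x hx => hUV hx, hem, fun x hx => ?_, fun y hy => ?_⟩
  · exact (congrArg e.symm (hl _ hx)).trans (e.symm_apply_apply x)
  · exact (congrArg Φ (e.apply_symm_apply _)).trans (hr y hy)

theorem AEquiv.comp_swap {f f₀ : R2 → R3} {p p₀ : R2} (h : AEquiv f p f₀ p₀) :
    AEquiv (fun q => f q.swap) p.swap f₀ p₀ := by
  obtain ⟨Φ, Ψ, hΦ, hΦp, hΨ, hΨp, heq⟩ := h
  have hswap : Tendsto (Prod.swap : R2 → R2) (𝓝 p.swap) (𝓝 p) :=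
    continuous_swap.tendsto' _ _ p.swap_swap
  exact ⟨fun q => Φ q.swap, Ψ,
    hΦ.comp_continuousLinearEquiv (ContinuousLinearEquiv.prodComm ℝ ℝ ℝ), hΦp, hΨ, hΨp,
    hswap.eventually heq⟩

end Germs

section NullCurves

open Topology
open scoped ContDiff

/-- The inner product `-t t' + x x' + y y'` of `L³`. -/
def lorentzInner (v w : R3) : ℝ := -(v.1 * w.1) + v.2.1 * w.2.1 + v.2.2 * w.2.2

theorem lorentzInner_smul_smul (c d : ℝ) (v w : R3) :
    lorentzInner (c • v) (d • w) = c * d * lorentzInner v w := by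
  simp only [lorentzInner, Prod.smul_fst, Prod.smul_snd, smul_eq_mul]
  ring

theorem lorentzInner_comm (v w : R3) : lorentzInner v w = lorentzInner w v := by
  simp only [lorentzInner, mul_comm]

theorem hasDerivAt_lorentzInner {X Y : ℝ → R3} {X' Y' : R3} {t : ℝ} (hX : HasDerivAt X X' t)
    (hY : HasDerivAt Y Y' t) :
    HasDerivAt (fun t => lorentzInner (X t) (Y t))
      (lorentzInner X' (Y t) + lorentzInner (X t) Y') t := by
  have hX₁ := hX.hasFDerivAt.fst.hasDerivAt
  have hX₂ := hX.hasFDerivAt.snd.fst.hasDerivAt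
  have hX₃ := hX.hasFDerivAt.snd.snd.hasDerivAt
  have hY₁ := hY.hasFDerivAt.fst.hasDerivAt
  have hY₂ := hY.hasFDerivAt.snd.fst.hasDerivAt
  have hY₃ := hY.hasFDerivAt.snd.snd.hasDerivAt
  refine (((hX₁.mul hY₁).neg.add (hX₂.mul hY₂)).add (hX₃.mul hY₃)).congr_deriv ?_
  simp only [ContinuousLinearMap.comp_apply, ContinuousLinearMap.toSpanSingleton_apply, one_smul,
    ContinuousLinearMap.coe_fst', ContinuousLinearMap.coe_snd', lorentzInner]
  ring

theorem eq_zero_of_lorentzInner_self {v : R3} (hv : lorentzInner v v = 0) (hv1 : v.1 = 0) :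
    v = 0 := by
  simp only [lorentzInner, hv1] at hv
  have hsum : v.2.1 ^ 2 + v.2.2 ^ 2 = 0 := by linear_combination hv
  obtain ⟨h₁, h₂⟩ := (add_eq_zero_iff_of_nonneg (sq_nonneg _) (sq_nonneg _)).1 hsum
  exact Prod.ext hv1 (Prod.ext (pow_eq_zero_iff two_ne_zero |>.1 h₁)
    (pow_eq_zero_iff two_ne_zero |>.1 h₂))

theorem fst_smul_eq_of_lorentzInner_eq_zero {v w : R3} (hv : lorentzInner v v = 0)
    (hw : lorentzInner w w = 0) (hvw : lorentzInner v w = 0) : w.1 • v = v.1 • w := by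
  refine sub_eq_zero.1 (eq_zero_of_lorentzInner_self ?_ ?_)
  · simp only [lorentzInner, Prod.fst_sub, Prod.snd_sub, Prod.smul_fst, Prod.smul_snd,
      smul_eq_mul] at *
    linear_combination w.1 ^ 2 * hv + v.1 ^ 2 * hw - 2 * v.1 * w.1 * hvw
  · simp [mul_comm]

theorem lorentzInner_ne_zero_of_linearIndependent {v w : R3} (hv : lorentzInner v v = 0)
    (hw : lorentzInner w w = 0) (h : LinearIndependent ℝ ![v, w]) : lorentzInner v w ≠ 0 := by
  intro hvw
  obtain ⟨hw1, -⟩ := LinearIndependent.pair_iff.1 h w.1 (-v.1) <| by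
    rw [neg_smul, fst_smul_eq_of_lorentzInner_eq_zero hv hw hvw, add_neg_cancel]
  exact h.ne_zero 1 (eq_zero_of_lorentzInner_self hw hw1)

/-- A smooth curve in `L³` whose velocity is everywhere lightlike or zero. -/
structure IsNullCurve (A : ℝ → R3) : Prop where
  contDiff : ContDiff ℝ ∞ A
  lorentzInner_deriv : ∀ t, lorentzInner (deriv A t) (deriv A t) = 0

theorem IsNullCurve.comp {A : ℝ → R3} (hA : IsNullCurve A) {σ : ℝ → ℝ} (hσ : ContDiff ℝ ∞ σ) :
    IsNullCurve fun s => A (σ s) := by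
  refine ⟨hA.contDiff.comp hσ, fun s => ?_⟩
  have hderiv : deriv (fun s => A (σ s)) s = deriv σ s • deriv A (σ s) :=
    ((hA.contDiff.differentiable (by simp) (σ s)).hasDerivAt.scomp s
      (hσ.differentiable (by simp) s).hasDerivAt).deriv
  rw [hderiv, lorentzInner_smul_smul, hA.lorentzInner_deriv, mul_zero]

theorem IsNullCurve.add_const {A : ℝ → R3} (hA : IsNullCurve A) (c : R3) :
    IsNullCurve fun t => A t + c :=
  ⟨hA.contDiff.add contDiff_const, fun t => by rw [deriv_add_const, hA.lorentzInner_deriv]⟩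

theorem IsNullCurve.lorentzInner_iteratedDeriv_of_deriv_eq_zero {A : ℝ → R3} (hA : IsNullCurve A)
    {t : ℝ} (ht : deriv A t = 0) :
    lorentzInner (iteratedDeriv 2 A t) (iteratedDeriv 2 A t) = 0 ∧
      lorentzInner (iteratedDeriv 2 A t) (iteratedDeriv 3 A t) = 0 := by
  have hd := hasDerivAt_iteratedDeriv hA.contDiff
  have h₁ : ∀ t, lorentzInner (iteratedDeriv 1 A t) (iteratedDeriv 1 A t) = 0 := fun t => by
    rw [iteratedDeriv_one, hA.lorentzInner_deriv]
  have h₂ : ∀ t, lorentzInner (iteratedDeriv 1 A t) (iteratedDeriv 2 A t) = 0 := fun t => by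
    have := (hasDerivAt_lorentzInner (hd 1 t) (hd 1 t)).unique
      ((hasDerivAt_const t 0).congr_of_eventuallyEq (.of_forall h₁))
    linarith [lorentzInner_comm (iteratedDeriv 1 A t) (iteratedDeriv 2 A t)]
  have h₃ : ∀ t, lorentzInner (iteratedDeriv 2 A t) (iteratedDeriv 2 A t) +
      lorentzInner (iteratedDeriv 1 A t) (iteratedDeriv 3 A t) = 0 := fun t =>
    (hasDerivAt_lorentzInner (hd 1 t) (hd 2 t)).unique
      ((hasDerivAt_const t 0).congr_of_eventuallyEq (.of_forall h₂))
  have h₄ := ((hasDerivAt_lorentzInner (hd 2 t) (hd 2 t)).add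
    (hasDerivAt_lorentzInner (hd 1 t) (hd 3 t))).unique
      ((hasDerivAt_const t 0).congr_of_eventuallyEq (.of_forall h₃))
  have hzero : ∀ v : R3, lorentzInner (iteratedDeriv 1 A t) v = 0 := fun v => by
    simp [iteratedDeriv_one, ht, lorentzInner]
  refine ⟨by linarith [h₃ t, hzero (iteratedDeriv 3 A t)], ?_⟩
  linarith [hzero (iteratedDeriv 4 A t),
    lorentzInner_comm (iteratedDeriv 2 A t) (iteratedDeriv 3 A t)]

end NullCurves

section Cusp

open Topology
open scoped ContDiff

variable {E F : Type*} [NormedAddCommGroup E] [NormedSpace ℝ E] [NormedAddCommGroup F]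
  [NormedSpace ℝ F]

theorem deriv_comp_of_deriv_eq_zero {Θ : E → F} {c : ℝ → E} {t : ℝ} (hΘ : ContDiff ℝ ∞ Θ)
    (hc : ContDiff ℝ ∞ c) (ht : deriv c t = 0) : deriv (fun s => Θ (c s)) t = 0 :=
  ((hΘ.differentiable (by simp) (c t)).hasFDerivAt.comp_hasDerivAt t
    (hc.differentiable (by simp) t).hasDerivAt).deriv.trans (by rw [ht, map_zero])

theorem iteratedDeriv_two_comp_of_deriv_eq_zero {Θ : E → F} {c : ℝ → E} {t : ℝ}
    (hΘ : ContDiff ℝ ∞ Θ) (hc : ContDiff ℝ ∞ c) (ht : deriv c t = 0) :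
    iteratedDeriv 2 (fun s => Θ (c s)) t = fderiv ℝ Θ (c t) (iteratedDeriv 2 c t) := by
  refine (iteratedDeriv_vcomp_two (contDiff_infty.1 hΘ 2).contDiffAt
    (contDiff_infty.1 hc 2).contDiffAt).trans ?_
  rw [ht, ContinuousMultilinearMap.map_coord_zero _ (0 : Fin 2) rfl, zero_add]

theorem iteratedDeriv_three_comp_of_deriv_eq_zero {Θ : E → F} {c : ℝ → E} {t : ℝ}
    (hΘ : ContDiff ℝ ∞ Θ) (hc : ContDiff ℝ ∞ c) (ht : deriv c t = 0) :
    iteratedDeriv 3 (fun s => Θ (c s)) t = fderiv ℝ Θ (c t) (iteratedDeriv 3 c t) := by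
  refine (iteratedDeriv_vcomp_three (contDiff_infty.1 hΘ 3).contDiffAt
    (contDiff_infty.1 hc 3).contDiffAt).trans ?_
  rw [ht, ContinuousMultilinearMap.map_coord_zero _ (0 : Fin 3) rfl,
    ContinuousMultilinearMap.map_coord_zero _ (1 : Fin 2) rfl,
    ContinuousMultilinearMap.map_coord_zero _ (0 : Fin 2) rfl, smul_zero, zero_add, zero_add,
    zero_add]

theorem iteratedDeriv_prodMk {f : ℝ → E} {g : ℝ → F} (hf : ContDiff ℝ ∞ f) (hg : ContDiff ℝ ∞ g)
    (k : ℕ) : iteratedDeriv k (fun s => (f s, g s)) =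
      fun s => (iteratedDeriv k f s, iteratedDeriv k g s) := by
  induction k with
  | zero => simp
  | succ k ih =>
    rw [iteratedDeriv_succ, ih]
    exact funext fun s =>
      ((hasDerivAt_iteratedDeriv hf k s).prodMk (hasDerivAt_iteratedDeriv hg k s)).deriv

theorem iteratedDeriv_cusp25_zero {a : ℝ → ℝ} (ha : ContDiff ℝ ∞ a) (k : ℕ) :
    iteratedDeriv k (fun s => ((a s, s ^ 2, s ^ 5) : R3)) 0 =
      (iteratedDeriv k a 0, ((if k = 2 then Nat.factorial 2 else 0 : ℕ) : ℝ),
        ((if k = 5 then Nat.factorial 5 else 0 : ℕ) : ℝ)) := by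
  have hpow : ∀ n : ℕ, ContDiff ℝ ∞ fun s : ℝ => s ^ n := fun n => contDiff_id.pow n
  rw [iteratedDeriv_prodMk ha ((hpow 2).prodMk (hpow 5)), iteratedDeriv_prodMk (hpow 2) (hpow 5)]
  simp only [iteratedDeriv_fun_pow_zero]

theorem linearIndependent_pair_of_injective {N : R3 →L[ℝ] E} (hN : Function.Injective N)
    {α β γ : ℝ} (hβ : β ≠ 0) (hγ : γ ≠ 0) : LinearIndependent ℝ ![N (α, γ, 0), N (β, 0, 0)] := by
  refine LinearIndependent.pair_iff.2 fun s t hst => ?_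
  rw [← map_smul, ← map_smul, ← map_add] at hst
  have hcoord := hN (hst.trans (map_zero _).symm)
  simp only [Prod.smul_mk, Prod.mk_add_mk, smul_eq_mul, mul_zero, add_zero, Prod.mk_eq_zero,
    mul_eq_zero, hγ, or_false, and_true] at hcoord
  obtain ⟨h₁, rfl⟩ := hcoord
  exact ⟨rfl, by simpa [hβ] using h₁⟩

theorem IsNullCurve.iteratedDeriv_three_eq_zero_of_eventuallyEq {C : ℝ → R3} (hC : IsNullCurve C)
    {Θ : R3 → R3} {a : ℝ → ℝ} {β : ℝ} (hΘ : ContDiff ℝ ∞ Θ) (ha : ContDiff ℝ ∞ a) (ha0 : a 0 = 0)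
    (ha1 : deriv a 0 = 0) (hinj : Function.Injective (fderiv ℝ Θ 0))
    (hβ : β ≠ 0) (hnull : lorentzInner (fderiv ℝ Θ 0 (β, 0, 0)) (fderiv ℝ Θ 0 (β, 0, 0)) = 0)
    (hCΘ : C =ᶠ[𝓝 0] fun s => Θ (a s, s ^ 2, s ^ 5)) : iteratedDeriv 3 a 0 = 0 := by
  set b := fderiv ℝ Θ 0 (β, 0, 0) with hb
  let c : ℝ → R3 := fun s => (a s, s ^ 2, s ^ 5)
  have hc : ContDiff ℝ ∞ c := ha.prodMk ((contDiff_id.pow 2).prodMk (contDiff_id.pow 5))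
  have hc0 : c 0 = 0 := by simp [c, ha0]
  have hc1 : deriv c 0 = 0 := by
    rw [← iteratedDeriv_one, iteratedDeriv_cusp25_zero ha, iteratedDeriv_one, ha1]
    simp
  have hC1 : deriv C 0 = 0 := hCΘ.deriv_eq.trans (deriv_comp_of_deriv_eq_zero hΘ hc hc1)
  have hC2 : iteratedDeriv 2 C 0 = fderiv ℝ Θ 0 (iteratedDeriv 2 a 0, 2, 0) := by
    rw [hCΘ.iteratedDeriv_eq, iteratedDeriv_two_comp_of_deriv_eq_zero hΘ hc hc1, hc0,
      iteratedDeriv_cusp25_zero ha]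
    simp
  have hC3 : iteratedDeriv 3 C 0 = (iteratedDeriv 3 a 0 / β) • b := by
    rw [hCΘ.iteratedDeriv_eq, iteratedDeriv_three_comp_of_deriv_eq_zero hΘ hc hc1, hc0,
      iteratedDeriv_cusp25_zero ha, hb, ← map_smul]
    simp [hβ]
  obtain ⟨h₂₂, h₂₃⟩ := hC.lorentzInner_iteratedDeriv_of_deriv_eq_zero hC1
  have hindep : LinearIndependent ℝ ![iteratedDeriv 2 C 0, b] :=
    hC2 ▸ linearIndependent_pair_of_injective hinj hβ two_ne_zero
  have hne := lorentzInner_ne_zero_of_linearIndependent h₂₂ hnull hindep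
  rw [hC3, ← one_smul ℝ (iteratedDeriv 2 C 0), lorentzInner_smul_smul, one_mul] at h₂₃
  simpa [hβ, hne] using h₂₃

/-- The curve `A` has at `u₀` the form `G (y ^ 2, y ^ 5)` in a local coordinate `y`, where the
image of `dG` at the origin is a plane transverse to the line spanned by `b`. -/
def IsTransverseCusp25 (A : ℝ → R3) (u₀ : ℝ) (b : R3) : Prop :=
  ∃ (G : R2 → R3) (y : ℝ → ℝ), ContDiff ℝ ∞ G ∧ ContDiff ℝ ∞ y ∧ y u₀ = 0 ∧ deriv y u₀ ≠ 0 ∧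
    Function.Injective (fun w : R3 => w.1 • b + fderiv ℝ G 0 w.2) ∧
    ∀ᶠ u in 𝓝 u₀, A u = G (y u ^ 2, y u ^ 5)

theorem IsTransverseCusp25.smul_add_const {A : ℝ → R3} {u₀ : ℝ} {b : R3}
    (h : IsTransverseCusp25 A u₀ b) {c₁ c₂ : ℝ} (hc₁ : c₁ ≠ 0) (hc₂ : c₂ ≠ 0) (c : R3) :
    IsTransverseCusp25 (fun u => c₁ • A u + c) u₀ (c₂ • b) := by
  obtain ⟨G, y, hG, hy, hy0, hy1, hinj, hA⟩ := h
  refine ⟨fun w => c₁ • G w + c, y, (hG.const_smul c₁).add contDiff_const, hy, hy0, hy1,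
    ?_, hA.mono fun u hu => by simp only [hu]⟩
  have hscale : Function.Injective fun w : R3 => (c₂ * w.1, c₁ • w.2) := fun w w' hw =>
    Prod.ext (mul_right_injective₀ hc₂ (Prod.ext_iff.1 hw).1)
      (smul_right_injective R2 hc₁ (Prod.ext_iff.1 hw).2)
  convert hinj.comp hscale using 2 with w
  rw [fderiv_add_const, fderiv_fun_const_smul (hG.differentiable (by simp) 0),
    smul_apply, ← map_smul, smul_smul, mul_comm w.1]
  rfl

theorem IsTransverseCusp25.aEquiv {A B : ℝ → R3} {p : R2} (hB : ContDiff ℝ ∞ B)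
    (h : IsTransverseCusp25 A p.1 (deriv B p.2)) :
    AEquiv (fun q => A q.1 + B q.2) p fCE25 (0, 0) := by
  obtain ⟨G, y, hG, hy, hy0, hy1, hinj, hA⟩ := h
  let H : R3 → R3 := fun w => G w.2 + B (p.2 + w.1)
  let Φ : R2 → R2 := fun q => (q.2 - p.2, y q.1)
  have hCE0 : fCE25 (0, 0) = 0 := by simp [fCE25]
  have hH : ContDiff ℝ ∞ H :=
    (hG.comp contDiff_snd).add (hB.comp (contDiff_const.add contDiff_fst))
  have hΦ : ContDiff ℝ ∞ Φ := (contDiff_snd.sub contDiff_const).prodMk (hy.comp contDiff_fst)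
  have hH0 : ∀ w, fderiv ℝ H 0 w = w.1 • deriv B p.2 + fderiv ℝ G 0 w.2 := fun w => by
    have hG' : HasFDerivAt (fun w : R3 => G w.2) _ 0 :=
      (hG.differentiable (by simp) 0).hasFDerivAt.comp (0 : R3) (hasFDerivAt_snd (E := ℝ))
    have hB' : HasFDerivAt (fun w : R3 => B (p.2 + w.1)) _ 0 :=
      (hB.differentiable (by simp) (p.2 + (0 : R3).1)).hasFDerivAt.comp (0 : R3)
        (hasFDerivAt_fst.const_add p.2)
    rw [(hG'.fun_add hB').fderiv]
    simp [add_comm]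
  have hΦp : ∀ w, fderiv ℝ Φ p w = (w.2, w.1 * deriv y p.1) := fun w => by
    have hy' : HasFDerivAt (fun q : R2 => y q.1) _ p :=
      (hy.differentiable (by simp) p.1).hasDerivAt.comp_hasFDerivAt p
        (ContinuousLinearMap.fst ℝ ℝ ℝ).hasFDerivAt
    rw [((hasFDerivAt_snd.sub_const p.2).prodMk hy').fderiv]
    simp [mul_comm]
  refine aEquiv_of_eventuallyEq (Φ := Φ) (H := H)
    (isLocalDiffeoAt_of_injective_fderiv hΦ fun w w' hw => ?_) (by simp [Φ, hy0])
    (isLocalDiffeoAt_of_injective_fderiv hH ?_) ?_ ?_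
  · rw [hΦp, hΦp] at hw
    exact Prod.ext (mul_left_injective₀ hy1 (Prod.ext_iff.1 hw).2) (Prod.ext_iff.1 hw).1
  · rw [hCE0, funext hH0]
    exact hinj
  · unfold fCE25
    fun_prop
  · filter_upwards [continuous_fst.continuousAt.eventually hA] with q hq
    simp [H, Φ, fCE25, hq]

theorem isTransverseCusp25_of_eventuallyEq {A : ℝ → R3} {u₀ β : ℝ} {y a : ℝ → ℝ}
    {Θ : R3 → R3} (hΘ : ContDiff ℝ ∞ Θ) (hinj : Function.Injective (fderiv ℝ Θ 0)) (hβ : β ≠ 0)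
    (hy : ContDiff ℝ ∞ y) (hy0 : y u₀ = 0) (hy1 : deriv y u₀ ≠ 0) (ha : ContDiff ℝ ∞ a)
    (ha0 : a 0 = 0) (ha1 : deriv a 0 = 0) (ha3 : iteratedDeriv 3 a 0 = 0)
    (hA : ∀ᶠ u in 𝓝 u₀, A u = Θ (a (y u), y u ^ 2, y u ^ 5)) :
    IsTransverseCusp25 A u₀ (fderiv ℝ Θ 0 (β, 0, 0)) := by
  obtain ⟨E, O, hE, hO, haEO⟩ := exists_contDiff_eq_comp_sq_add ha (m := 2) fun k hk => by
    interval_cases k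
    · simpa using ha1
    · simpa using ha3
  let e : R2 → R3 := fun w => (E w.1 + w.2 * O w.1, w.1, w.2)
  have he : ContDiff ℝ ∞ e := ((hE.comp contDiff_fst).add
    (contDiff_snd.mul (hO.comp contDiff_fst))).prodMk contDiff_id
  have he0 : e 0 = 0 := by
    have : E 0 = 0 := by simpa [ha0] using (haEO 0).symm
    simp [e, this]
  have hed := (he.differentiable (by simp) 0).hasFDerivAt
  have hed2 : ∀ w, (fderiv ℝ e 0 w).2 = w := DFunLike.congr_fun (hed.snd.unique (hasFDerivAt_id 0))
  have hGd : ∀ w, fderiv ℝ (fun w => Θ (e w)) 0 w = fderiv ℝ Θ 0 (fderiv ℝ e 0 w) := fun w => by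
    rw [fderiv_fun_comp 0 (hΘ.differentiable (by simp) (e 0)) hed.differentiableAt, he0]
    rfl
  refine ⟨fun w => Θ (e w), y, hΘ.comp he, hy, hy0, hy1, ?_, ?_⟩
  · intro w w' hw
    simp only [hGd, ← map_smul, ← map_add] at hw
    have heq := hinj hw
    have h2 : w.2 = w'.2 := by simpa [hed2] using congrArg Prod.snd heq
    rw [h2, add_left_inj] at heq
    exact Prod.ext (mul_left_injective₀ hβ (congrArg Prod.fst heq)) h2
  · filter_upwards [hA] with u hu
    rw [hu, haEO]
    simp [e]

end Cusp

section Weierstrass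

open Topology
open scoped ContDiff

theorem fCE25_zero : fCE25 (0, 0) = 0 := by simp [fCE25]

theorem hasFDerivAt_fCE25 {q : R2} (hq : q.2 = 0) :
    HasFDerivAt fCE25 ((ContinuousLinearMap.fst ℝ ℝ ℝ).prod (0 : R2 →L[ℝ] R2)) q := by
  have h₁ : HasFDerivAt (fun q : R2 => q.1) (ContinuousLinearMap.fst ℝ ℝ ℝ) q := hasFDerivAt_fst
  have h₂ : HasFDerivAt (fun q : R2 => q.2) (ContinuousLinearMap.snd ℝ ℝ ℝ) q := hasFDerivAt_snd
  refine (h₁.prodMk ((h₂.pow 2).prodMk (h₂.pow 5))).congr_fderiv ?_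
  ext <;> simp [hq]

theorem fst_ne_zero_of_injective {M : R2 →L[ℝ] R2} (hM : Function.Injective M)
    (h : (M (1, 0)).1 = 0) : (M (0, 1)).1 ≠ 0 := by
  intro h'
  have hker : M (-(M (0, 1)).2, (M (1, 0)).2) = 0 := by
    have hdecomp : ((-(M (0, 1)).2, (M (1, 0)).2) : R2) =
        (M (1, 0)).2 • (0, 1) - (M (0, 1)).2 • (1, 0) := by simp
    rw [hdecomp, map_sub, map_smul, map_smul]
    exact Prod.ext (by simp [h, h']) (by simp [mul_comm])
  have hM1 : (M (1, 0)).2 = 0 := congrArg Prod.snd ((map_eq_zero_iff M hM).1 hker)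
  simpa using (map_eq_zero_iff M hM).1 (Prod.ext h hM1 : M (1, 0) = 0)

theorem AEquiv.exists_eq_cusp25 {f : R2 → R3} {p : R2} (h : AEquiv f p fCE25 (0, 0))
    (hf : DifferentiableAt ℝ f p) (hu : pu f p = 0) :
    ∃ (Θ : R3 → R3) (x y : ℝ → ℝ) (β : ℝ), ContDiff ℝ ∞ Θ ∧ Function.Injective (fderiv ℝ Θ 0) ∧
      ContDiff ℝ ∞ x ∧ x p.1 = 0 ∧ deriv x p.1 = 0 ∧ ContDiff ℝ ∞ y ∧ y p.1 = 0 ∧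
      deriv y p.1 ≠ 0 ∧ β ≠ 0 ∧ pv f p = fderiv ℝ Θ 0 (β, 0, 0) ∧
      ∀ᶠ u in 𝓝 p.1, f (u, p.2) = Θ (x u, y u ^ 2, y u ^ 5) := by
  obtain ⟨Φ, Θ, hΦ, hΘ, hΦp, hΦinj, hΘinj, heq⟩ := h.exists_contDiff hf.continuousAt
  rw [fCE25_zero] at hΘinj
  have hd : ∀ w, fderiv ℝ f p w = fderiv ℝ Θ 0 ((fderiv ℝ Φ p w).1, 0, 0) := fun w => by
    have hCE : HasFDerivAt (fun q => fCE25 (Φ q)) _ p :=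
      (hasFDerivAt_fCE25 (q := Φ p) (by rw [hΦp])).comp p
        (hΦ.differentiable (by simp) p).hasFDerivAt
    have hΘCE : HasFDerivAt (fun q => Θ (fCE25 (Φ q))) _ p :=
      (hΘ.differentiable (by simp) (fCE25 (Φ p))).hasFDerivAt.comp p hCE
    rw [EventuallyEq.fderiv_eq heq, hΘCE.fderiv, hΦp, fCE25_zero]
    rfl
  have hx1 : (fderiv ℝ Φ p (1, 0)).1 = 0 :=
    congrArg Prod.fst ((map_eq_zero_iff _ hΘinj).1 ((hd (1, 0)).symm.trans hu))
  have hy1 : (fderiv ℝ Φ p (1, 0)).2 ≠ 0 := fun hy1 => by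
    simpa using (map_eq_zero_iff _ hΦinj).1 (Prod.ext hx1 hy1 : fderiv ℝ Φ p (1, 0) = 0)
  have hγ : ContDiff ℝ ∞ fun u => Φ (u, p.2) := hΦ.comp (contDiff_id.prodMk contDiff_const)
  have hγ1 : HasFDerivAt (fun u => Φ (u, p.2)) _ p.1 :=
    ((hΦ.differentiable (by simp) p).hasFDerivAt.comp_hasDerivAt p.1
      ((hasDerivAt_id p.1).prodMk (hasDerivAt_const p.1 p.2))).hasFDerivAt
  refine ⟨Θ, fun u => (Φ (u, p.2)).1, fun u => (Φ (u, p.2)).2, (fderiv ℝ Φ p (0, 1)).1, hΘ,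
    hΘinj, hγ.fst, by simp [hΦp], ?_, hγ.snd, by simp [hΦp], ?_,
    fst_ne_zero_of_injective hΦinj hx1, hd (0, 1), ?_⟩
  · simpa [hx1] using hγ1.fst.hasDerivAt.deriv
  · simpa [hγ1.snd.hasDerivAt.deriv] using hy1
  · exact (Continuous.prodMk_left p.2).continuousAt.eventually heq

theorem isTransverseCusp25_of_aEquiv {A B : ℝ → R3} {p : R2} (hA : IsNullCurve A)
    (hB : IsNullCurve B) (hA1 : deriv A p.1 = 0)
    (h : AEquiv (fun q => A q.1 + B q.2) p fCE25 (0, 0)) :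
    IsTransverseCusp25 (fun u => A u + B p.2) p.1 (deriv B p.2) := by
  have hA' : ∀ q : R2, HasFDerivAt (fun q : R2 => A q.1) _ q := fun q =>
    (hA.contDiff.differentiable (by simp) q.1).hasFDerivAt.comp q hasFDerivAt_fst
  have hB' : ∀ q : R2, HasFDerivAt (fun q : R2 => B q.2) _ q := fun q =>
    (hB.contDiff.differentiable (by simp) q.2).hasFDerivAt.comp q hasFDerivAt_snd
  have hf := (hA' p).fun_add (hB' p)
  have hpv : pv (fun q : R2 => A q.1 + B q.2) p = deriv B p.2 := by
    simp [pv, hf.fderiv]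
  obtain ⟨Θ, x, y, β, hΘ, hΘinj, hx, hx0, hx1, hy, hy0, hy1, hβ, hb, hAΘ⟩ :=
    h.exists_eq_cusp25 hf.differentiableAt (by simp [pu, hf.fderiv, hA1])
  rw [hpv] at hb
  obtain ⟨σ, hσ, hσy, hyσ⟩ := exists_contDiff_localInverse_of_deriv_ne_zero hy hy1
  have hσ0 : σ 0 = p.1 := hy0 ▸ hσy.self_of_nhds
  have ha0 : x (σ 0) = 0 := by rw [hσ0, hx0]
  have ha1 : deriv (fun s => x (σ s)) 0 = 0 := by
    have hxσ : HasDerivAt (fun s => x (σ s)) _ 0 :=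
      (hx.differentiable (by simp) (σ 0)).hasDerivAt.comp 0
        (hσ.differentiable (by simp) 0).hasDerivAt
    rw [hxσ.deriv, hσ0, hx1, zero_mul]
  have hnull : IsNullCurve fun s => A (σ s) + B p.2 := (hA.add_const (B p.2)).comp hσ
  have ha3 := hnull.iteratedDeriv_three_eq_zero_of_eventuallyEq hΘ (hx.comp hσ) ha0 ha1 hΘinj hβ
    (hb ▸ hB.lorentzInner_deriv p.2) (by
      have hσt : Tendsto σ (𝓝 0) (𝓝 p.1) := hσ.continuous.tendsto' _ _ hσ0
      filter_upwards [hσt.eventually hAΘ, hy0 ▸ hyσ] with s hs hys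
      simpa [hys] using hs)
  rw [hb]
  refine isTransverseCusp25_of_eventuallyEq hΘ hΘinj hβ hy hy0 hy1 (hx.comp hσ) ha0 ha1 ha3 ?_
  filter_upwards [hAΘ, hσy] with u hu hσu
  simpa [hσu] using hu

theorem aEquiv_smul_add_smul_of_aEquiv {A B : ℝ → R3} {p : R2} (hA : IsNullCurve A)
    (hB : IsNullCurve B) (hA1 : deriv A p.1 = 0) {c₁ c₂ : ℝ} (hc₁ : c₁ ≠ 0) (hc₂ : c₂ ≠ 0)
    (c : R3) (h : AEquiv (fun q => A q.1 + B q.2) p fCE25 (0, 0)) :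
    AEquiv (fun q => c₁ • A q.1 + c₂ • B q.2 + c) p fCE25 (0, 0) := by
  have hA' := (isTransverseCusp25_of_aEquiv hA hB hA1 h).smul_add_const hc₁ hc₂ (c - c₁ • B p.2)
  rw [← deriv_const_smul c₂ (hB.contDiff.differentiable (by simp) p.2)] at hA'
  convert hA'.aEquiv (hB.contDiff.const_smul c₂) using 2 with q
  module

theorem hasDerivAt_comp_fst {f : R2 → R3} (hf : Differentiable ℝ f) (u v : ℝ) :
    HasDerivAt (fun u => f (u, v)) (pu f (u, v)) u :=
  (hf (u, v)).hasFDerivAt.comp_hasDerivAt u ((hasDerivAt_id u).prodMk (hasDerivAt_const u v))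

theorem hasDerivAt_comp_snd {f : R2 → R3} (hf : Differentiable ℝ f) (u v : ℝ) :
    HasDerivAt (fun v => f (u, v)) (pv f (u, v)) v :=
  (hf (u, v)).hasFDerivAt.comp_hasDerivAt v ((hasDerivAt_const v u).prodMk (hasDerivAt_id v))

theorem exists_eq_add_add_const {f : R2 → R3} {A B : ℝ → R3} (hf : Differentiable ℝ f)
    (hA : Differentiable ℝ A) (hB : Differentiable ℝ B) (hu : ∀ q, pu f q = deriv A q.1)
    (hv : ∀ q, pv f q = deriv B q.2) : ∃ c, ∀ q, f q = A q.1 + B q.2 + c := by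
  have hconst_u : ∀ v u₁ u₂, f (u₁, v) - A u₁ = f (u₂, v) - A u₂ := fun v =>
    have h : ∀ u, HasDerivAt (fun u => f (u, v) - A u) 0 u := fun u =>
      ((hasDerivAt_comp_fst hf u v).sub (hA u).hasDerivAt).congr_deriv (by rw [hu, sub_self])
    is_const_of_deriv_eq_zero (fun u => (h u).differentiableAt) fun u => (h u).deriv
  have hconst_v : ∀ v₁ v₂, f (0, v₁) - B v₁ = f (0, v₂) - B v₂ :=
    have h : ∀ v, HasDerivAt (fun v => f (0, v) - B v) 0 v := fun v =>
      ((hasDerivAt_comp_snd hf 0 v).sub (hB v).hasDerivAt).congr_deriv (by rw [hv, sub_self])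
    is_const_of_deriv_eq_zero (fun v => (h v).differentiableAt) fun v => (h v).deriv
  refine ⟨f (0, 0) - A 0 - B 0, fun q => ?_⟩
  rw [sub_eq_iff_eq_add.1 (hconst_u q.2 q.1 0), sub_eq_iff_eq_add.1 (hconst_v q.2 0)]
  abel

theorem IsGTMS.exists_isNullCurve {f : R2 → R3} {g1 g2 w1 w2 : ℝ → ℝ}
    (hf : IsGTMS f g1 g2 w1 w2) :
    ∃ A B : ℝ → R3, IsNullCurve A ∧ IsNullCurve B ∧ (∀ q, pu f q = deriv A q.1) ∧
      (∀ q, pv f q = deriv B q.2) ∧ ∀ q, f q = A q.1 + B q.2 := by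
  have hd : Differentiable ℝ f := hf.smooth_f.differentiable (by simp)
  let A : ℝ → R3 := fun u => f (u, 0)
  let B : ℝ → R3 := fun v => f (0, v)
  have hA : ContDiff ℝ ∞ A := hf.smooth_f.comp (contDiff_id.prodMk contDiff_const)
  have hB : ContDiff ℝ ∞ B := hf.smooth_f.comp (contDiff_const.prodMk contDiff_id)
  have hu : ∀ q, pu f q = deriv A q.1 := fun q => by
    rw [(hasDerivAt_comp_fst hd q.1 0).deriv, hf.deriv_u, hf.deriv_u]
  have hv : ∀ q, pv f q = deriv B q.2 := fun q => by
    rw [(hasDerivAt_comp_snd hd 0 q.2).deriv, hf.deriv_v, hf.deriv_v]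
  have hAnull : IsNullCurve A := ⟨hA, fun u => by
    rw [← hu (u, 0), hf.deriv_u, lorentzInner]
    ring⟩
  have hBnull : IsNullCurve B := ⟨hB, fun v => by
    rw [← hv (0, v), hf.deriv_v, lorentzInner]
    ring⟩
  obtain ⟨c, hc⟩ := exists_eq_add_add_const hd (hA.differentiable (by simp))
    (hB.differentiable (by simp)) hu hv
  refine ⟨A, fun v => B v + c, hAnull, hBnull.add_const c, hu, fun q => ?_, fun q => ?_⟩
  · rw [deriv_add_const, hv]
  · rw [hc, add_assoc]

theorem IsGTMS.aEquiv_fCE25_of_rescale {f f' : R2 → R3} {g1 g2 w1 w2 w1' w2' : ℝ → ℝ}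
    {p : R2} {c₁ c₂ : ℝ} (hf : IsGTMS f g1 g2 w1 w2) (hf' : IsGTMS f' g1 g2 w1' w2')
    (hc₁ : c₁ ≠ 0) (hc₂ : c₂ ≠ 0) (h₁ : ∀ u, w1' u = c₁ * w1 u) (h₂ : ∀ v, w2' v = c₂ * w2 v)
    (hω : w1 p.1 * w2 p.2 = 0) (h : AEquiv f p fCE25 (0, 0)) : AEquiv f' p fCE25 (0, 0) := by
  obtain ⟨A, B, hA, hB, hu, hv, hfAB⟩ := hf.exists_isNullCurve
  have hdA : Differentiable ℝ A := hA.contDiff.differentiable (by simp)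
  have hdB : Differentiable ℝ B := hB.contDiff.differentiable (by simp)
  obtain ⟨c, hf'AB⟩ : ∃ c, ∀ q, f' q = c₁ • A q.1 + c₂ • B q.2 + c := by
    refine exists_eq_add_add_const (hf'.smooth_f.differentiable (by simp)) (hdA.const_smul c₁)
      (hdB.const_smul c₂) (fun q => ?_) fun q => ?_
    · rw [deriv_const_smul c₁ (hdA q.1), ← hu, hf'.deriv_u, hf.deriv_u, h₁]
      ext <;> simp <;> ring
    · rw [deriv_const_smul c₂ (hdB q.2), ← hv, hf'.deriv_v, hf.deriv_v, h₂]
      ext <;> simp <;> ring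
  rw [funext hfAB] at h
  rw [funext hf'AB]
  rcases mul_eq_zero.1 hω with hw | hw
  · have hA1 : deriv A p.1 = 0 := by simp [← hu, hf.deriv_u, hw]
    exact aEquiv_smul_add_smul_of_aEquiv hA hB hA1 hc₁ hc₂ c h
  · have hB1 : deriv B p.2 = 0 := by simp [← hv, hf.deriv_v, hw]
    have h' : AEquiv (fun q => B q.1 + A q.2) p.swap fCE25 (0, 0) := by
      simpa only [add_comm, Prod.fst_swap, Prod.snd_swap] using h.comp_swap
    have hswap := (aEquiv_smul_add_smul_of_aEquiv hB hA hB1 hc₂ hc₁ c h').comp_swap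
    simpa only [add_comm (c₂ • B _), Prod.fst_swap, Prod.snd_swap, Prod.swap_swap] using hswap

end Weierstrass

/-- invariance of (2,5)-cuspidal edges under the associated family
(isometric deformation) and conjugation (anti-isometric deformation). -/
theorem invariance_25_cuspidal_edge
    (f fhat : R2 → R3) (F : ℝ → R2 → R3) (g1 g2 w1 w2 : ℝ → ℝ)
    (hf : IsGTMS f g1 g2 w1 w2)
    (hF : ∀ θ : ℝ, IsGTMS (F θ) g1 g2
      (fun u => Real.exp θ * w1 u) (fun v => Real.exp (-θ) * w2 v))
    (hfhat : IsGTMS fhat g1 g2 w1 (fun v => -w2 v))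
    (p : R2) (hω : w1 p.1 * w2 p.2 = 0) :
    (AEquiv f p fCE25 (0, 0) ↔ ∀ θ : ℝ, AEquiv (F θ) p fCE25 (0, 0)) ∧
    (AEquiv f p fCE25 (0, 0) ↔ AEquiv fhat p fCE25 (0, 0)) := by
  have h0 : ∀ θ, exp θ * w1 p.1 * (exp (-θ) * w2 p.2) = 0 := fun θ => by
    rw [mul_mul_mul_comm, hω, mul_zero]
  refine ⟨⟨fun h θ => ?_, fun h => ?_⟩, fun h => ?_, fun h => ?_⟩
  · exact hf.aEquiv_fCE25_of_rescale (hF θ) (exp_ne_zero θ) (exp_ne_zero (-θ)) (fun _ => rfl)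
      (fun _ => rfl) hω h
  · exact (hF 0).aEquiv_fCE25_of_rescale hf one_ne_zero one_ne_zero (by simp) (by simp) (h0 0) (h 0)
  · exact hf.aEquiv_fCE25_of_rescale hfhat one_ne_zero (neg_ne_zero.2 one_ne_zero) (by simp)
      (by simp) hω h
  · exact hfhat.aEquiv_fCE25_of_rescale hf one_ne_zero (neg_ne_zero.2 one_ne_zero) (by simp)
      (by simp) (by rw [mul_neg, hω, neg_zero]) h
end
end

section
/- Existence of (2,2k+1)-cuspidal edges for every positive integer k: let k ≥ 1 be an integer and let f be the generalized timelike minimal surface with real Weierstrass data (g1, g2, ω1 du, ω2 dv) in which g2(v) = v^{2k-1}, ω2(v) = v, and g1, ω1 are smooth functions of u with ω1(0) ≠ 0. Then at each point (u0, 0) of the line v = 0 with ω1(u0) ≠ 0, the map f is A-equivalent to the (2,2k+1)-cuspidal edge f_CE^{(2,2k+1)}(u,v) = (u, v^2, v^{2k+1}) at the origin. -/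
noncomputable section

open Real Filter

/-!
The surface is a sum `f(u, v) = f(u, 0) + γ(v)` of two null curves. For `g₂ = vᵐ` and `ω₂ = v`
one integrates
`γ(v) = (v² / 4) (1, 1, 0) + (v²ᵐ⁺² / (4 (m + 1))) (1, -1, 0) - (vᵐ⁺² / (m + 2)) (0, 0, 1)`,
and since `v²ᵐ⁺² = (v²)ᵐ⁺¹` this is a smooth function `σ` of `(v², vᵐ⁺²)`. Hence `f` is the model
`(u, v², vᵐ⁺²)`, translated in the source, followed by the map `Θ(x, y) = f(u₀ + x, 0) + σ(y)` of
the ambient space. If `m ≥ 1`, the differential of `Θ` at the origin has columns `f_u(u₀, 0)`,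
`(1, 1, 0) / 4` and `-(0, 0, 1) / (m + 2)`; its determinant is a nonzero multiple of `ω₁(u₀)`, so
`Θ` is a local diffeomorphism.
-/

open scoped Topology ContDiff

namespace IsLocalDiffeoAt

variable {E F : Type*} [NormedAddCommGroup E] [NormedSpace ℝ E] [NormedAddCommGroup F]
  [NormedSpace ℝ F] {Θ : E → F} {p : E}

lemma continuousAt (h : IsLocalDiffeoAt Θ p) : ContinuousAt Θ p := by
  obtain ⟨U, V, Θinv, hU, hpU, -, -, hΘ, -⟩ := h
  exact hΘ.continuousOn.continuousAt (hU.mem_nhds hpU)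

lemma exists_leftInverse (h : IsLocalDiffeoAt Θ p) :
    ∃ Ψ : F → E, IsLocalDiffeoAt Ψ (Θ p) ∧ ∀ᶠ x in 𝓝 p, Ψ (Θ x) = x := by
  obtain ⟨U, V, Ψ, hU, hpU, hV, hpV, hΘ, hΨ, hmaps, hmaps', hleft, hright⟩ := h
  refine ⟨Ψ, ⟨V, U, Θ, hV, hpV, hU, ?_, hΨ, hΘ, hmaps', hmaps, hright, hleft⟩, ?_⟩
  · rwa [hleft p hpU]
  · filter_upwards [hU.mem_nhds hpU] using hleft

lemma of_openPartialHomeomorph (H : OpenPartialHomeomorph E F) (hp : p ∈ H.source)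
    (hH : ContDiffOn ℝ ∞ H H.source) (hH' : ContDiffOn ℝ ∞ H.symm H.target) :
    IsLocalDiffeoAt H p :=
  ⟨H.source, H.target, H.symm, H.open_source, hp, H.open_target, H.map_source hp, hH, hH',
    H.mapsTo, H.symm.mapsTo, fun _ => H.left_inv, fun _ => H.right_inv⟩

lemma sub_const (c p : E) : IsLocalDiffeoAt (fun x => x - c) p :=
  of_openPartialHomeomorph (Homeomorph.subRight c).toOpenPartialHomeomorph (Set.mem_univ p)
    (contDiff_id.sub contDiff_const).contDiffOn (contDiff_id.add contDiff_const).contDiffOn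

lemma of_isInvertible_fderiv [CompleteSpace E] (hΘ : ∀ᶠ x in 𝓝 p, ContDiffAt ℝ ∞ Θ x)
    (hinv : (fderiv ℝ Θ p).IsInvertible) : IsLocalDiffeoAt Θ p := by
  have hn : (∞ : WithTop ℕ∞) ≠ 0 := by simp
  have hΘp : ContDiffAt ℝ ∞ Θ p := hΘ.self_of_nhds
  have hinv' : ∀ᶠ x in 𝓝 p, (fderiv ℝ Θ x).IsInvertible :=
    (hΘp.continuousAt_fderiv hn).eventually (ContinuousLinearEquiv.isOpen.mem_nhds hinv)
  obtain ⟨W, hW, hWo, hpW⟩ := eventually_nhds_iff.mp (hΘ.and hinv')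
  obtain ⟨e, he⟩ := hinv
  have hd : HasFDerivAt Θ (e : E →L[ℝ] F) p := he ▸ (hΘp.differentiableAt hn).hasFDerivAt
  let H := (hΘp.toOpenPartialHomeomorph Θ hd hn).restrOpen W hWo
  have hHW : ∀ x ∈ H.source, x ∈ W := fun x hx => hx.2
  refine of_openPartialHomeomorph H ⟨hΘp.mem_toOpenPartialHomeomorph_source hd hn, hpW⟩
    (fun x hx => (hW x (hHW x hx)).1.contDiffWithinAt) fun y hy => ?_
  obtain ⟨hsmooth, e', he'⟩ := hW _ (hHW _ (H.map_target hy))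
  have hd' : HasFDerivAt H (e' : E →L[ℝ] F) (H.symm y) :=
    he' ▸ (hsmooth.differentiableAt hn).hasFDerivAt
  exact (H.contDiffAt_symm hy hd' hsmooth).contDiffWithinAt

end IsLocalDiffeoAt

lemma AEquiv.of_eventuallyEq_comp {f₁ f₂ : R2 → R3} {p₁ p₂ : R2} {Φ : R2 → R2} {Θ : R3 → R3}
    (hΦ : IsLocalDiffeoAt Φ p₁) (hΦp : Φ p₁ = p₂) (hf₂ : ContinuousAt f₂ p₂)
    (hΘ : IsLocalDiffeoAt Θ (f₂ p₂)) (h : ∀ᶠ x in 𝓝 p₁, f₁ x = Θ (f₂ (Φ x))) :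
    AEquiv f₁ p₁ f₂ p₂ := by
  subst hΦp
  obtain ⟨Ψ, hΨ, hinv⟩ := hΘ.exists_leftInverse
  have hbase : f₁ p₁ = Θ (f₂ (Φ p₁)) := h.self_of_nhds
  have hcont : Tendsto (fun x => f₂ (Φ x)) (𝓝 p₁) (𝓝 (f₂ (Φ p₁))) :=
    hf₂.tendsto.comp hΦ.continuousAt
  refine ⟨Φ, Ψ, hΦ, rfl, hbase ▸ hΨ, hbase ▸ hinv.self_of_nhds, ?_⟩
  filter_upwards [h, hcont.eventually hinv] with x hx hΨx
  rw [hx, hΨx]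

lemma eq_zero_of_det3_ne_zero {a b c : R3} (h : det3 a b c ≠ 0) {x : R3}
    (hx : x.1 • a + x.2.1 • b + x.2.2 • c = 0) : x = 0 := by
  obtain ⟨r, s, t⟩ := x
  simp only [Prod.ext_iff, Prod.fst_add, Prod.snd_add, Prod.smul_fst, Prod.smul_snd, smul_eq_mul,
    Prod.fst_zero, Prod.snd_zero] at hx ⊢
  obtain ⟨h₁, h₂, h₃⟩ := hx
  refine ⟨mul_right_cancel₀ h ?_, mul_right_cancel₀ h ?_, mul_right_cancel₀ h ?_⟩ <;>
    simp only [det3, zero_mul]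
  -- Cramer's rule: the coefficients are the cofactors of `a`, `b` and `c` respectively.
  · linear_combination (b.2.1 * c.2.2 - b.2.2 * c.2.1) * h₁ -
      (b.1 * c.2.2 - b.2.2 * c.1) * h₂ + (b.1 * c.2.1 - b.2.1 * c.1) * h₃
  · linear_combination -(a.2.1 * c.2.2 - a.2.2 * c.2.1) * h₁ +
      (a.1 * c.2.2 - a.2.2 * c.1) * h₂ - (a.1 * c.2.1 - a.2.1 * c.1) * h₃
  · linear_combination (a.2.1 * b.2.2 - a.2.2 * b.2.1) * h₁ -
      (a.1 * b.2.2 - a.2.2 * b.1) * h₂ + (a.1 * b.2.1 - a.2.1 * b.1) * h₃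

lemma isInvertible_of_det3_ne_zero {L : R3 →L[ℝ] R3}
    (h : det3 (L (1, 0, 0)) (L (0, 1, 0)) (L (0, 0, 1)) ≠ 0) : L.IsInvertible := by
  have hcols : ∀ x : R3,
      L x = x.1 • L (1, 0, 0) + x.2.1 • L (0, 1, 0) + x.2.2 • L (0, 0, 1) := fun x => by
    simp only [← map_smul, ← map_add]
    simp
  have hinj : Function.Injective (L : R3 →ₗ[ℝ] R3) :=
    (injective_iff_map_eq_zero _).mpr fun x hx => eq_zero_of_det3_ne_zero h (hcols x ▸ hx)
  exact ⟨(LinearEquiv.ofInjectiveEndo (L : R3 →ₗ[ℝ] R3) hinj).toContinuousLinearEquiv, rfl⟩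

lemma isLocalDiffeoAt_add_of_det3_ne_zero {α : ℝ → R3} {σ : R2 → R3} (hα : ContDiff ℝ ∞ α)
    (hσ : ContDiff ℝ ∞ σ) {x : R3} (hdet : det3 (deriv α x.1) (pu σ x.2) (pv σ x.2) ≠ 0) :
    IsLocalDiffeoAt (fun y : R3 => α y.1 + σ y.2) x := by
  have hn : (∞ : WithTop ℕ∞) ≠ 0 := by simp
  have hα' : HasFDerivAt α _ x.1 := (hα.differentiable hn x.1).hasDerivAt.hasFDerivAt
  have hσ' : HasFDerivAt σ _ x.2 := (hσ.differentiable hn x.2).hasFDerivAt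
  have hsum := (hα'.comp x hasFDerivAt_fst).add (hσ'.comp x hasFDerivAt_snd)
  have hsmooth : ContDiff ℝ ∞ fun y : R3 => α y.1 + σ y.2 := by fun_prop
  refine .of_isInvertible_fderiv (.of_forall fun y => hsmooth.contDiffAt)
    (isInvertible_of_det3_ne_zero ?_)
  rw [HasFDerivAt.fderiv (f := fun y : R3 => α y.1 + σ y.2) hsum]
  simpa [pu, pv, ← Prod.zero_eq_mk] using hdet

lemma hasDerivAt_pu {f : R2 → R3} {u v : ℝ} (hf : DifferentiableAt ℝ f (u, v)) :
    HasDerivAt (fun t => f (t, v)) (pu f (u, v)) u :=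
  hf.hasFDerivAt.comp_hasDerivAt u ((hasDerivAt_id u).prodMk (hasDerivAt_const u v))

lemma hasDerivAt_pv {f : R2 → R3} {u v : ℝ} (hf : DifferentiableAt ℝ f (u, v)) :
    HasDerivAt (fun t => f (u, t)) (pv f (u, v)) v :=
  hf.hasFDerivAt.comp_hasDerivAt v ((hasDerivAt_const v u).prodMk (hasDerivAt_id v))

lemma eq_add_sub_of_hasDerivAt_pv {f : R2 → R3} (hf : Differentiable ℝ f) {γ : ℝ → R3} {u : ℝ}
    (hγ : ∀ v, HasDerivAt γ (pv f (u, v)) v) (v v₀ : ℝ) :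
    f (u, v) = f (u, v₀) + (γ v - γ v₀) := by
  have hd : ∀ t, HasDerivAt (fun t => f (u, t) - γ t) 0 t := fun t =>
    ((hasDerivAt_pv (hf (u, t))).sub (hγ t)).congr_deriv (sub_self _)
  have hconst : f (u, v) - γ v = f (u, v₀) - γ v₀ :=
    is_const_of_deriv_eq_zero (fun t => (hd t).differentiableAt) (fun t => (hd t).deriv) v v₀
  rw [← add_sub_assoc, add_sub_right_comm, ← hconst, sub_add_cancel]

theorem aEquiv_powers_of_eq_add {f : R2 → R3} {α : ℝ → R3} {σ : R2 → R3} {m n : ℕ} {u₀ : ℝ}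
    (hm : m ≠ 0) (hn : n ≠ 0) (hα : ContDiff ℝ ∞ α) (hσ : ContDiff ℝ ∞ σ)
    (hdet : det3 (deriv α u₀) (pu σ 0) (pv σ 0) ≠ 0)
    (hf : ∀ᶠ q : R2 in 𝓝 (u₀, 0), f q = α q.1 + σ (q.2 ^ m, q.2 ^ n)) :
    AEquiv f (u₀, 0) (fun q => (q.1, q.2 ^ m, q.2 ^ n)) (0, 0) := by
  have hα₀ : ContDiff ℝ ∞ fun t => α (u₀ + t) := by fun_prop
  have hΘ : IsLocalDiffeoAt (fun x : R3 => α (u₀ + x.1) + σ x.2) 0 := by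
    refine isLocalDiffeoAt_add_of_det3_ne_zero hα₀ hσ ?_
    rwa [deriv_comp_const_add, Prod.fst_zero, Prod.snd_zero, add_zero]
  refine .of_eventuallyEq_comp (.sub_const (u₀, 0) (u₀, 0)) (sub_self _) (by fun_prop)
    (Θ := fun x => α (u₀ + x.1) + σ x.2) ?_ ?_
  · simpa [hm, hn, Prod.zero_eq_mk] using hΘ
  · filter_upwards [hf] with q hq
    simpa using hq

/-- The null curve `∫₀ᵛ (1 + s²ᵐ, 1 - s²ᵐ, -2sᵐ) (s / 2) ds`, written as a function of
`y = (v², vᵐ⁺²)`; its smoothness in `y` makes the surface a smooth image of `(u, v², vᵐ⁺²)`. -/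
def powNullCurve (m : ℕ) (y : R2) : R3 :=
  (y.1 / 4 + y.1 ^ (m + 1) / (4 * (m + 1)), y.1 / 4 - y.1 ^ (m + 1) / (4 * (m + 1)),
    -(y.2 / (m + 2)))

lemma contDiff_powNullCurve (m : ℕ) : ContDiff ℝ ∞ (powNullCurve m) := by
  unfold powNullCurve
  fun_prop

lemma hasDerivAt_powNullCurve (m : ℕ) (v : ℝ) :
    HasDerivAt (fun v : ℝ => powNullCurve m (v ^ 2, v ^ (m + 2)))
      ((1 + (v ^ m) ^ 2) * v / 2, (1 - (v ^ m) ^ 2) * v / 2, -(v ^ m * v)) v := by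
  have h₁ : HasDerivAt (fun v : ℝ => v ^ 2 / 4) (v / 2) v :=
    ((hasDerivAt_pow 2 v).div_const 4).congr_deriv (by norm_num; ring)
  have h₂ : HasDerivAt (fun v : ℝ => (v ^ 2) ^ (m + 1) / (4 * ((m : ℝ) + 1)))
      ((v ^ m) ^ 2 * v / 2) v := by
    refine (((hasDerivAt_pow 2 v).fun_pow (m + 1)).div_const _).congr_deriv ?_
    push_cast
    field_simp
    ring
  have h₃ : HasDerivAt (fun v : ℝ => v ^ (m + 2) / ((m : ℝ) + 2)) (v ^ m * v) v := by
    refine ((hasDerivAt_pow (m + 2) v).div_const _).congr_deriv ?_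
    push_cast
    field_simp
    ring
  refine ((h₁.add h₂).prodMk ((h₁.sub h₂).prodMk h₃.neg)).congr_deriv ?_
  ext <;> simp only <;> ring

lemma pu_powNullCurve_zero {m : ℕ} (hm : m ≠ 0) : pu (powNullCurve m) 0 = (1 / 4, 1 / 4, 0) := by
  have hlin : HasDerivAt (fun t : ℝ => t / 4) (1 / 4) 0 := (hasDerivAt_id 0).div_const 4
  have hpow : HasDerivAt (fun t : ℝ => t ^ (m + 1) / (4 * ((m : ℝ) + 1))) 0 0 :=
    ((hasDerivAt_pow (m + 1) 0).div_const _).congr_deriv (by simp [hm])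
  have hcurve : HasDerivAt (fun t : ℝ => powNullCurve m (t, 0)) (1 / 4, 1 / 4, 0) 0 := by
    simpa [powNullCurve] using
      (hlin.add hpow).prodMk ((hlin.sub hpow).prodMk (hasDerivAt_const (0 : ℝ) (0 : ℝ)))
  exact (hasDerivAt_pu ((contDiff_powNullCurve m).differentiable (by simp) _)).unique hcurve

lemma pv_powNullCurve_zero (m : ℕ) :
    pv (powNullCurve m) 0 = (0, 0, -(1 / ((m : ℝ) + 2))) := by
  have hcurve : HasDerivAt (fun t : ℝ => powNullCurve m (0, t)) (0, 0, -(1 / ((m : ℝ) + 2))) 0 := by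
    have hzero : HasDerivAt (fun _ : ℝ => (0 : ℝ)) 0 0 := hasDerivAt_const _ _
    simpa [powNullCurve] using
      hzero.prodMk (hzero.prodMk ((hasDerivAt_id (0 : ℝ)).div_const ((m : ℝ) + 2)).neg)
  exact (hasDerivAt_pv ((contDiff_powNullCurve m).differentiable (by simp) _)).unique hcurve

lemma det3_powNullCurve_ne_zero {m : ℕ} (hm : m ≠ 0) {a : R3} (ha : a.1 ≠ a.2.1) :
    det3 a (pu (powNullCurve m) 0) (pv (powNullCurve m) 0) ≠ 0 := by
  have hdet : det3 a (pu (powNullCurve m) 0) (pv (powNullCurve m) 0) =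
      (a.2.1 - a.1) / (4 * ((m : ℝ) + 2)) := by
    rw [pu_powNullCurve_zero hm, pv_powNullCurve_zero, det3]
    field_simp
    ring
  rw [hdet]
  exact div_ne_zero (sub_ne_zero.mpr ha.symm) (by positivity)

lemma IsGTMS.eq_add_powNullCurve {f : R2 → R3} {g₁ w₁ : ℝ → ℝ} {m : ℕ}
    (hf : IsGTMS f g₁ (fun v => v ^ m) w₁ (fun v => v)) (u v : ℝ) :
    f (u, v) = f (u, 0) + powNullCurve m (v ^ 2, v ^ (m + 2)) := by
  have hγ (v : ℝ) :
      HasDerivAt (fun v : ℝ => powNullCurve m (v ^ 2, v ^ (m + 2))) (pv f (u, v)) v :=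
    (hasDerivAt_powNullCurve m v).congr_deriv (hf.deriv_v (u, v)).symm
  have hγ₀ : powNullCurve m ((0 : ℝ) ^ 2, (0 : ℝ) ^ (m + 2)) = 0 := by
    simp [powNullCurve]
  rw [eq_add_sub_of_hasDerivAt_pv (hf.smooth_f.differentiable (by simp)) hγ v 0, hγ₀, sub_zero]

lemma IsGTMS.fst_pu_ne_snd_pu {f : R2 → R3} {g₁ g₂ w₁ w₂ : ℝ → ℝ} (hf : IsGTMS f g₁ g₂ w₁ w₂)
    {p : R2} (hw : w₁ p.1 ≠ 0) : (pu f p).1 ≠ (pu f p).2.1 := by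
  rw [hf.deriv_u]
  contrapose! hw
  linear_combination -hw

theorem existence_2_2k1_cuspidal_edges_general {f : R2 → R3} {g₁ w₁ : ℝ → ℝ} {m : ℕ} (hm : m ≠ 0)
    (hf : IsGTMS f g₁ (fun v => v ^ m) w₁ (fun v => v)) {u₀ : ℝ} (hw : w₁ u₀ ≠ 0) :
    AEquiv f (u₀, 0) (fun q => (q.1, q.2 ^ 2, q.2 ^ (m + 2))) (0, 0) := by
  have hsmooth : ContDiff ℝ ∞ f := hf.smooth_f
  have hα : deriv (fun u => f (u, 0)) u₀ = pu f (u₀, 0) :=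
    (hasDerivAt_pu (hsmooth.differentiable (by simp) _)).deriv
  refine aEquiv_powers_of_eq_add (α := fun u => f (u, 0)) two_ne_zero (by omega) (by fun_prop)
    (contDiff_powNullCurve m) ?_ (.of_forall fun q => hf.eq_add_powNullCurve q.1 q.2)
  rw [hα]
  exact det3_powNullCurve_ne_zero hm (hf.fst_pu_ne_snd_pu hw)

/-- existence of (2,2k+1)-cuspidal edges for every positive integer k. -/
theorem existence_2_2k1_cuspidal_edges
    (k : ℕ) (hk : 1 ≤ k)
    (f : R2 → R3) (g1 w1 : ℝ → ℝ)
    (hf : IsGTMS f g1 (fun v => v ^ (2 * k - 1)) w1 (fun v => v))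
    (hw10 : w1 0 ≠ 0) :
    ∀ u0 : ℝ, w1 u0 ≠ 0 →
      AEquiv f (u0, 0) (fun q => (q.1, q.2 ^ 2, q.2 ^ (2 * k + 1))) (0, 0) := by
  intro u0 hw
  have hexp : 2 * k + 1 = 2 * k - 1 + 2 := by omega
  rw [hexp]
  exact existence_2_2k1_cuspidal_edges_general (by omega) hf hw
end
end
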